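/- arXiv:1605.04193 — 2 statements merged into one kernel-verified Lean document; each statement's English description precedes it below -/
import Mathlib

section
/- Let R > 0, B > 0, h > 0, let m ≥ 0 be an integer and k ≥ 1 an integer. Then for every complex linear subspace V of C_c^∞((0,R);ℂ) of dimension k + 1 there exists a nonzero u ∈ V with q_m(u) ≥ 2 h B k ∫₀^R |u(r)|² r dr. (This is the min-max formulation of the statement that the k-th Dirichlet eigenvalue of the fiber operator at angular momentum m ≥ 0 is at least 2hBk; in particular the second eigenvalue is at least 2hB.) -/
/-!
Write `c = B / (2h)`, `A_s = d/dr - (s/r - c r)` and `A_s*` for its adjoint in `L²(r dr)`.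
Integrating the cross term by parts gives `q_m(u) = h² ‖A_m u‖²`, and the same integration by parts
gives the ladder relation `‖A_s* v‖² = ‖A_{s+1} v‖² + 4c ‖v‖²`.

In a space of dimension `k + 1` some `u ≠ 0` is orthogonal to the `k` functions
`r ^ (m+2j) exp (-c r² / 2)`, `j < k`, whose span is that of the `k` lowest radial
eigenfunctions, and for such `u` one shows `4ck ‖u‖² ≤ ‖A_m u‖²` by induction on `k`. Orthogonality
to `j = 0` is the solvability condition for `u = A_m* v` with Dirichlet conditions at both ends; the
other conditions on `u` become `k - 1` conditions of the same kind on `v`, at angular momentum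
`m + 1`. Hence `‖u‖² = ‖A_{m+1} v‖² + 4c ‖v‖² ≥ 4ck ‖v‖²` by induction, and since
`‖u‖² = ⟪A_m u, v⟫` the inequality of arithmetic and geometric means turns this lower bound for
`‖u‖` into the one for `‖A_m u‖`.
-/

open MeasureTheory Filter Topology

noncomputable section

/-- The fiber quadratic form at angular momentum `m`:
`q_m(u) = h²∫₀^R (|u′(r)|² + (m/r − Br/(2h))²|u(r)|²) r dr − hB∫₀^R |u(r)|² r dr`. -/
def qm (R B h : ℝ) (m : ℤ) (u : ℝ → ℂ) : ℝ :=
  h ^ 2 * (∫ r in Set.Ioo (0:ℝ) R,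
      (‖deriv u r‖ ^ 2 + ((m : ℝ) / r - B * r / (2 * h)) ^ 2 * ‖u r‖ ^ 2) * r)
    - h * B * ∫ r in Set.Ioo (0:ℝ) R, ‖u r‖ ^ 2 * r

/-- `u ∈ C_c^∞((0,R); ℂ)`. -/
def IsCptSmooth0R (R : ℝ) (u : ℝ → ℂ) : Prop :=
  ContDiff ℝ (⊤ : ℕ∞) u ∧ HasCompactSupport u ∧ tsupport u ⊆ Set.Ioo 0 R

section Ladder

open Set
open scoped RealInnerProductSpace

/-- The logarithmic derivative of `r ^ s * exp (-c r² / 2)`. For `c = B / (2h)` and `s = m` its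
square is the potential in `q_m`. -/
def drift (c s r : ℝ) : ℝ := s / r - c * r

/-- The Gaussian-damped powers against which orthogonality is imposed. The exponent is real to cover
negative angular momenta as well; only the values at `0 < r` matter, where `Real.rpow` is the usual
power. -/
def powGauss (c s r : ℝ) : ℝ := r ^ s * Real.exp (-(c * r ^ 2 / 2))

lemma powGauss_pos (c s : ℝ) {r : ℝ} (hr : 0 < r) : 0 < powGauss c s r :=
  mul_pos (Real.rpow_pos_of_pos hr s) (Real.exp_pos _)

lemma powGauss_sub_one (c s : ℝ) {r : ℝ} (hr : 0 < r) :
    powGauss c (s - 1) r = powGauss c s r / r := by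
  rw [powGauss, powGauss, Real.rpow_sub_one hr.ne', div_mul_eq_mul_div]

lemma hasDerivAt_powGauss (c s : ℝ) {r : ℝ} (hr : 0 < r) :
    HasDerivAt (powGauss c s) (drift c s r * powGauss c s r) r := by
  have hpow := Real.hasDerivAt_rpow_const (p := s) (Or.inl hr.ne')
  have hexp := (((hasDerivAt_pow 2 r).const_mul c).div_const 2).fun_neg.exp
  refine (hpow.mul hexp).congr_deriv ?_
  rw [drift, powGauss, Real.rpow_sub_one hr.ne']
  push_cast
  ring

lemma continuousOn_powGauss (c s : ℝ) : ContinuousOn (powGauss c s) (Ioi 0) :=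
  fun _ hr => (hasDerivAt_powGauss c s hr).continuousAt.continuousWithinAt

lemma continuousOn_drift (c s : ℝ) : ContinuousOn (drift c s) (Ioi 0) :=
  (continuousOn_const.div continuousOn_id fun _ hr => ne_of_gt hr).sub (by fun_prop)

lemma hasDerivAt_mul_drift (c s : ℝ) {r : ℝ} (hr : 0 < r) :
    HasDerivAt (fun x => x * drift c s x) (-(2 * c * r)) r := by
  have hquad : HasDerivAt (fun x => s - c * x ^ 2) (-(2 * c * r)) r :=
    (((hasDerivAt_pow 2 r).const_mul c).const_sub s).congr_deriv (by push_cast; ring)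
  refine hquad.congr_of_eventuallyEq ?_
  filter_upwards [Ioi_mem_nhds hr] with x hx
  have := ne_of_gt (mem_Ioi.1 hx)
  rw [drift]
  field_simp

lemma integral_eq_of_hasDerivAt_sub {E : Type*} [NormedAddCommGroup E] [NormedSpace ℝ E]
    [CompleteSpace E] {a b : ℝ} {s : Set ℝ} (hs : uIcc a b ⊆ s) {f g F : ℝ → E}
    (hf : ContinuousOn f s) (hg : ContinuousOn g s)
    (hF : ∀ r ∈ s, HasDerivAt F (f r - g r) r) (hab : F a = F b) :
    ∫ r in a..b, f r = ∫ r in a..b, g r := by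
  have hfi := (hf.mono hs).intervalIntegrable (μ := volume)
  have hgi := (hg.mono hs).intervalIntegrable (μ := volume)
  rw [← sub_eq_zero, ← intervalIntegral.integral_sub hfi hgi,
    intervalIntegral.integral_eq_sub_of_hasDerivAt (fun r hr => hF r (hs hr)) (hfi.sub hgi), hab,
    sub_self]

variable {E : Type*} [NormedAddCommGroup E]

/-- The annihilation operator `A_s = d/dr - (s/r - c r)` of the fiber at angular momentum `s`. -/
def annihilation [NormedSpace ℝ E] (c s : ℝ) (u : ℝ → E) (r : ℝ) : E :=
  deriv u r - drift c s r • u r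

/-- The creation operator `A_s* = -(d/dr + (s+1)/r - c r)`, the formal adjoint of
`annihilation c s` in `L²(r dr)`; the shift from `s` to `s + 1` comes from differentiating the
density `r`. -/
def creation [NormedSpace ℝ E] (c s : ℝ) (u : ℝ → E) (r : ℝ) : E :=
  -(deriv u r + drift c (s + 1) r • u r)

/-- `C¹` Dirichlet test functions on `[a, b] ⊆ (0, ∞)`. Regularity is asked for on all of `(0, ∞)`
so that the derivative at the endpoints is the ordinary one. -/
structure IsDirichletC1 [NormedSpace ℝ E] (a b : ℝ) (u : ℝ → E) : Prop where
  differentiableOn : DifferentiableOn ℝ u (Ioi 0)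
  continuousOn_deriv : ContinuousOn (deriv u) (Ioi 0)
  left_eq_zero : u a = 0
  right_eq_zero : u b = 0

namespace IsDirichletC1

variable [NormedSpace ℝ E] {a b : ℝ} {u : ℝ → E}

lemma hasDerivAt (hu : IsDirichletC1 a b u) {r : ℝ} (hr : 0 < r) : HasDerivAt u (deriv u r) r :=
  (hu.differentiableOn.differentiableAt (Ioi_mem_nhds hr)).hasDerivAt

lemma continuousOn (hu : IsDirichletC1 a b u) : ContinuousOn u (Ioi 0) :=
  hu.differentiableOn.continuousOn

lemma continuousOn_annihilation (hu : IsDirichletC1 a b u) (c s : ℝ) :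
    ContinuousOn (annihilation c s u) (Ioi 0) :=
  hu.continuousOn_deriv.sub ((continuousOn_drift c s).smul hu.continuousOn)

lemma continuousOn_creation (hu : IsDirichletC1 a b u) (c s : ℝ) :
    ContinuousOn (creation c s u) (Ioi 0) :=
  (hu.continuousOn_deriv.add ((continuousOn_drift c (s + 1)).smul hu.continuousOn)).neg

end IsDirichletC1

section InnerProduct

variable [InnerProductSpace ℝ E] {a b : ℝ} {u v : ℝ → E}

lemma integral_drift_mul_inner_deriv (hI : uIcc a b ⊆ Ioi 0) (hu : IsDirichletC1 a b u)
    (c s : ℝ) :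
    ∫ r in a..b, 2 * drift c s r * ⟪u r, deriv u r⟫ * r = ∫ r in a..b, 2 * c * (‖u r‖ ^ 2 * r) := by
  have hu₀ := hu.continuousOn
  have hu₁ := hu.continuousOn_deriv
  have hd := continuousOn_drift c s
  refine integral_eq_of_hasDerivAt_sub (F := fun x => x * drift c s x * ‖u x‖ ^ 2) hI
    (by fun_prop) (by fun_prop) (fun r hr => ?_)
    (by simp [hu.left_eq_zero, hu.right_eq_zero])
  refine ((hasDerivAt_mul_drift c s hr).fun_mul (hu.hasDerivAt hr).norm_sq).congr_deriv ?_
  ring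

lemma norm_annihilation_sq (c s : ℝ) (u : ℝ → E) (r : ℝ) :
    ‖annihilation c s u r‖ ^ 2 = ‖deriv u r‖ ^ 2 + drift c s r ^ 2 * ‖u r‖ ^ 2
      - 2 * drift c s r * ⟪u r, deriv u r⟫ := by
  rw [annihilation, norm_sub_sq_real, norm_smul, real_inner_smul_right, real_inner_comm, mul_pow,
    Real.norm_eq_abs, sq_abs]
  ring

lemma norm_creation_sq (c s : ℝ) (u : ℝ → E) (r : ℝ) :
    ‖creation c s u r‖ ^ 2 = ‖annihilation c (s + 1) u r‖ ^ 2
      + 2 * (2 * drift c (s + 1) r * ⟪u r, deriv u r⟫) := by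
  rw [norm_annihilation_sq, creation, norm_neg, norm_add_sq_real, norm_smul, real_inner_smul_right,
    real_inner_comm, mul_pow, Real.norm_eq_abs, sq_abs]
  ring

lemma integral_norm_annihilation_sq (hI : uIcc a b ⊆ Ioi 0) (hu : IsDirichletC1 a b u)
    (c s : ℝ) :
    ∫ r in a..b, ‖annihilation c s u r‖ ^ 2 * r
      = (∫ r in a..b, (‖deriv u r‖ ^ 2 + drift c s r ^ 2 * ‖u r‖ ^ 2) * r)
        - 2 * c * ∫ r in a..b, ‖u r‖ ^ 2 * r := by
  have hu₀ := hu.continuousOn.mono hI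
  have hu₁ := hu.continuousOn_deriv.mono hI
  have hd := (continuousOn_drift c s).mono hI
  rw [← intervalIntegral.integral_const_mul, ← integral_drift_mul_inner_deriv hI hu c s,
    ← intervalIntegral.integral_sub (ContinuousOn.intervalIntegrable (by fun_prop))
      (ContinuousOn.intervalIntegrable (by fun_prop))]
  simp only [norm_annihilation_sq, sub_mul]

lemma integral_norm_creation_sq (hI : uIcc a b ⊆ Ioi 0) (hu : IsDirichletC1 a b u) (c s : ℝ) :
    ∫ r in a..b, ‖creation c s u r‖ ^ 2 * r
      = (∫ r in a..b, ‖annihilation c (s + 1) u r‖ ^ 2 * r)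
        + 4 * c * ∫ r in a..b, ‖u r‖ ^ 2 * r := by
  have hu₀ := hu.continuousOn.mono hI
  have hu₁ := hu.continuousOn_deriv.mono hI
  have hd := (continuousOn_drift c (s + 1)).mono hI
  have hA := (hu.continuousOn_annihilation c (s + 1)).mono hI
  have hcross := integral_drift_mul_inner_deriv hI hu c (s + 1)
  simp only [norm_creation_sq, add_mul, mul_assoc (2 : ℝ)]
  rw [intervalIntegral.integral_add (ContinuousOn.intervalIntegrable (by fun_prop))
    (ContinuousOn.intervalIntegrable (by fun_prop)), intervalIntegral.integral_const_mul]
  simp only [mul_assoc, intervalIntegral.integral_const_mul] at hcross ⊢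
  rw [hcross]
  ring

lemma integral_inner_annihilation (hI : uIcc a b ⊆ Ioi 0) (hu : IsDirichletC1 a b u)
    (hv : IsDirichletC1 a b v) (c s : ℝ) :
    ∫ r in a..b, ⟪annihilation c s u r, v r⟫ * r = ∫ r in a..b, ⟪u r, creation c s v r⟫ * r := by
  have hu₀ := hu.continuousOn
  have hv₀ := hv.continuousOn
  have hA := hu.continuousOn_annihilation c s
  have hC := hv.continuousOn_creation c s
  refine integral_eq_of_hasDerivAt_sub (F := fun x => x * ⟪u x, v x⟫) hI
    (by fun_prop) (by fun_prop) (fun r hr => ?_)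
    (by simp [hu.left_eq_zero, hu.right_eq_zero])
  refine ((hasDerivAt_id r).fun_mul ((hu.hasDerivAt hr).inner ℝ (hv.hasDerivAt hr))).congr_deriv ?_
  have := ne_of_gt (mem_Ioi.1 hr)
  simp only [annihilation, creation, drift, inner_sub_left, inner_neg_right, inner_add_right,
    real_inner_smul_left, real_inner_smul_right, id_eq]
  field_simp
  ring

lemma two_mul_integral_inner_le (ha : 0 ≤ a) (hab : a ≤ b) (hu : ContinuousOn u (Icc a b))
    (hv : ContinuousOn v (Icc a b)) (t : ℝ) :
    2 * t * ∫ r in a..b, ⟪u r, v r⟫ * r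
      ≤ (∫ r in a..b, ‖u r‖ ^ 2 * r) + t ^ 2 * ∫ r in a..b, ‖v r‖ ^ 2 * r := by
  rw [← uIcc_of_le hab] at hu hv
  rw [← intervalIntegral.integral_const_mul, ← intervalIntegral.integral_const_mul,
    ← intervalIntegral.integral_add (ContinuousOn.intervalIntegrable (by fun_prop))
      (ContinuousOn.intervalIntegrable (by fun_prop))]
  refine intervalIntegral.integral_mono_on hab (ContinuousOn.intervalIntegrable (by fun_prop))
    (ContinuousOn.intervalIntegrable (by fun_prop)) fun r hr => ?_
  have hexpand : ‖u r - t • v r‖ ^ 2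
      = ‖u r‖ ^ 2 - 2 * t * ⟪u r, v r⟫ + t ^ 2 * ‖v r‖ ^ 2 := by
    rw [norm_sub_sq_real, real_inner_smul_right, norm_smul, mul_pow, Real.norm_eq_abs, sq_abs]
    ring
  have hsq := mul_nonneg (sq_nonneg ‖u r - t • v r‖) (ha.trans hr.1)
  rw [hexpand] at hsq
  linarith

end InnerProduct

section Inversion

variable [NormedSpace ℝ E] [CompleteSpace E] {a b : ℝ} {u v : ℝ → E}

lemma integral_powGauss_smul_creation (hI : uIcc a b ⊆ Ioi 0) (hv : IsDirichletC1 a b v)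
    (c s t : ℝ) :
    ∫ r in a..b, powGauss c t r • creation c s v r
      = (t - s - 1) • ∫ r in a..b, powGauss c (t - 1) r • v r := by
  have hv₀ := hv.continuousOn
  have hC := hv.continuousOn_creation c s
  have hp := continuousOn_powGauss c t
  have hp' := continuousOn_powGauss c (t - 1)
  rw [← intervalIntegral.integral_smul]
  refine (integral_eq_of_hasDerivAt_sub (F := fun x => powGauss c t x • v x) hI
    (by fun_prop) (by fun_prop) (fun r hr => ?_)
    (by simp [hv.left_eq_zero, hv.right_eq_zero])).symm
  refine ((hasDerivAt_powGauss c t hr).fun_smul (hv.hasDerivAt hr)).congr_deriv ?_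
  rw [powGauss_sub_one c t hr, creation, drift, drift]
  match_scalars <;> ring

lemma exists_creation_eq (ha : 0 < a) (hu : ContinuousOn u (Ioi 0)) (c s : ℝ)
    (horth : ∫ r in a..b, powGauss c (s + 1) r • u r = 0) :
    ∃ v, IsDirichletC1 a b v ∧ ∀ r, 0 < r → creation c s v r = u r := by
  set p := powGauss c (s + 1)
  have hp {r : ℝ} (hr : 0 < r) : p r ≠ 0 := (powGauss_pos c (s + 1) hr).ne'
  have hp' {r : ℝ} (hr : 0 < r) : HasDerivAt p (drift c (s + 1) r * p r) r :=
    hasDerivAt_powGauss c (s + 1) hr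
  have hpu : ContinuousOn (fun r => p r • u r) (Ioi 0) := (continuousOn_powGauss c (s + 1)).smul hu
  set Φ : ℝ → E := fun x => ∫ r in a..x, p r • u r with hΦ
  have hΦ' {r : ℝ} (hr : 0 < r) : HasDerivAt Φ (p r • u r) r :=
    intervalIntegral.integral_hasDerivAt_right
      (hpu.mono (ordConnected_Ioi.uIcc_subset ha hr)).intervalIntegrable
      (hpu.stronglyMeasurableAtFilter isOpen_Ioi r hr) (hpu.continuousAt (Ioi_mem_nhds hr))
  set v : ℝ → E := fun x => -((p x)⁻¹ • Φ x) with hv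
  have hv' {r : ℝ} (hr : 0 < r) : HasDerivAt v (-u r - drift c (s + 1) r • v r) r := by
    refine (((hp' hr).fun_inv (hp hr)).fun_smul (hΦ' hr)).fun_neg.congr_deriv ?_
    have := hp hr
    simp only [hv]
    match_scalars <;> field_simp
  have hv_diff : DifferentiableOn ℝ v (Ioi 0) := fun r hr =>
    (hv' hr).differentiableAt.differentiableWithinAt
  have hv_deriv : ContinuousOn (deriv v) (Ioi 0) :=
    (hu.neg.sub ((continuousOn_drift c (s + 1)).smul hv_diff.continuousOn)).congr
      fun r hr => (hv' hr).deriv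
  refine ⟨v, ⟨hv_diff, hv_deriv, by simp [hv, hΦ], by simp [hv, hΦ, horth]⟩, fun r hr => ?_⟩
  rw [creation, (hv' hr).deriv, sub_add_cancel, neg_neg]

end Inversion

lemma integral_powGauss_smul_eq_zero_of_creation_eq [NormedSpace ℝ E] [CompleteSpace E]
    {a b : ℝ} {u v : ℝ → E} (hI : uIcc a b ⊆ Ioi 0) (hv : IsDirichletC1 a b v) {c s t : ℝ}
    (hvu : ∀ r, 0 < r → creation c s v r = u r) (ht : t ≠ s)
    (horth : ∫ r in a..b, powGauss c (t + 1) r • u r = 0) :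
    ∫ r in a..b, powGauss c t r • v r = 0 := by
  have hmoment := integral_powGauss_smul_creation hI hv c s (t + 1)
  have hcongr : ∫ r in a..b, powGauss c (t + 1) r • creation c s v r
      = ∫ r in a..b, powGauss c (t + 1) r • u r :=
    intervalIntegral.integral_congr fun r hr => by simp only [hvu r (hI hr)]
  rw [hcongr, horth, add_sub_right_comm, add_sub_cancel_right, add_sub_cancel_right] at hmoment
  exact (smul_eq_zero.1 hmoment.symm).resolve_left (sub_ne_zero.2 ht)

lemma integral_norm_sq_mul_nonneg {a b : ℝ} (ha : 0 ≤ a) (hab : a ≤ b) (u : ℝ → E) :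
    0 ≤ ∫ r in a..b, ‖u r‖ ^ 2 * r :=
  intervalIntegral.integral_nonneg hab fun _ hr => mul_nonneg (sq_nonneg _) (ha.trans hr.1)

section Bound

variable [InnerProductSpace ℝ E] {a b c s : ℝ} {u v : ℝ → E}

lemma mul_integral_norm_sq_le_of_creation_eq (ha : 0 < a) (hab : a ≤ b)
    (hu : IsDirichletC1 a b u) (hv : IsDirichletC1 a b v)
    (hvu : ∀ r, 0 < r → creation c s v r = u r) {t : ℝ} (ht : 0 ≤ t)
    (hbound : t * ∫ r in a..b, ‖v r‖ ^ 2 * r ≤ ∫ r in a..b, ‖u r‖ ^ 2 * r) :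
    t * ∫ r in a..b, ‖u r‖ ^ 2 * r ≤ ∫ r in a..b, ‖annihilation c s u r‖ ^ 2 * r := by
  have hI : uIcc a b ⊆ Ioi 0 := ordConnected_Ioi.uIcc_subset ha (ha.trans_le hab)
  have hI' : Icc a b ⊆ Ioi 0 := Icc_subset_uIcc.trans hI
  have hpair : ∫ r in a..b, ⟪annihilation c s u r, v r⟫ * r = ∫ r in a..b, ‖u r‖ ^ 2 * r := by
    rw [integral_inner_annihilation hI hu hv]
    refine intervalIntegral.integral_congr fun r hr => ?_
    simp only [hvu r (hI hr), real_inner_self_eq_norm_sq]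
  have hamgm := two_mul_integral_inner_le ha.le hab
    ((hu.continuousOn_annihilation c s).mono hI') (hv.continuousOn.mono hI') t
  rw [hpair] at hamgm
  linarith [mul_le_mul_of_nonneg_left hbound ht]

lemma mul_integral_norm_sq_le_integral_norm_annihilation_sq [CompleteSpace E] (ha : 0 < a)
    (hab : a ≤ b) (k : ℕ) (hu : IsDirichletC1 a b u)
    (horth : ∀ j < k, ∫ r in a..b, powGauss c (s + 2 * j + 1) r • u r = 0) :
    4 * c * k * ∫ r in a..b, ‖u r‖ ^ 2 * r ≤ ∫ r in a..b, ‖annihilation c s u r‖ ^ 2 * r := by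
  have hI : uIcc a b ⊆ Ioi 0 := ordConnected_Ioi.uIcc_subset ha (ha.trans_le hab)
  rcases le_total c 0 with hc | hc
  · refine (mul_nonpos_of_nonpos_of_nonneg ?_ (integral_norm_sq_mul_nonneg ha.le hab u)).trans
      (integral_norm_sq_mul_nonneg ha.le hab _)
    exact mul_nonpos_of_nonpos_of_nonneg (by linarith) k.cast_nonneg
  induction k generalizing s u with
  | zero => simpa using integral_norm_sq_mul_nonneg ha.le hab (annihilation c s u)
  | succ k ih =>
    obtain ⟨v, hv, hvu⟩ := exists_creation_eq ha hu.continuousOn c s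
      (by simpa using horth 0 k.succ_pos)
    have hv_orth (j : ℕ) (hj : j < k) :
        ∫ r in a..b, powGauss c (s + 1 + 2 * j + 1) r • v r = 0 := by
      refine integral_powGauss_smul_eq_zero_of_creation_eq hI hv hvu (by linarith) ?_
      rw [← horth (j + 1) (by lia)]
      push_cast
      ring_nf
    have hv_bound := ih hv hv_orth
    refine mul_integral_norm_sq_le_of_creation_eq ha hab hu hv hvu (by positivity) ?_
    calc 4 * c * (k + 1 : ℕ) * ∫ r in a..b, ‖v r‖ ^ 2 * r
        = 4 * c * k * (∫ r in a..b, ‖v r‖ ^ 2 * r) + 4 * c * ∫ r in a..b, ‖v r‖ ^ 2 * r := by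
          push_cast; ring
      _ ≤ (∫ r in a..b, ‖annihilation c (s + 1) v r‖ ^ 2 * r)
            + 4 * c * ∫ r in a..b, ‖v r‖ ^ 2 * r := by gcongr
      _ = ∫ r in a..b, ‖creation c s v r‖ ^ 2 * r := (integral_norm_creation_sq hI hv c s).symm
      _ = ∫ r in a..b, ‖u r‖ ^ 2 * r :=
          intervalIntegral.integral_congr fun r hr => by simp only [hvu r (hI hr)]

end Bound

end Ladder

section SupportedFunctions

variable {E : Type*} [NormedAddCommGroup E] [NormedSpace ℝ E]

lemma exists_subset_Ioo_of_isClosed_of_subset_Ioo {S : Set ℝ} {p q : ℝ} (hS : IsClosed S)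
    (hpq : p < q) (hSpq : S ⊆ Set.Ioo p q) : ∃ a ∈ Set.Ioo p q, S ⊆ Set.Ioo a q := by
  have hp : Sᶜ ∈ 𝓝 p := hS.isOpen_compl.mem_nhds fun h => (hSpq h).1.false
  obtain ⟨d, ⟨hpd, hdq⟩, hdS⟩ := exists_Ico_subset_of_mem_nhds' hp hpq
  obtain ⟨a, hpa, had⟩ := exists_between hpd
  refine ⟨a, ⟨hpa, had.trans_le hdq⟩, fun x hx => ⟨?_, (hSpq hx).2⟩⟩
  by_contra! hxa
  exact hdS ⟨(hSpq hx).1.le, hxa.trans_lt had⟩ hx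

lemma setIntegral_Ioo_eq_intervalIntegral {p a b : ℝ} (hpa : p < a) (hab : a ≤ b) {F : ℝ → E}
    (hF : ∀ x < a, F x = 0) : ∫ r in Set.Ioo p b, F r = ∫ r in a..b, F r := by
  rw [intervalIntegral.integral_of_le hab, ← integral_Ico_eq_integral_Ioc]
  refine setIntegral_eq_of_subset_of_forall_sdiff_eq_zero measurableSet_Ioo
    (fun x hx => ⟨hpa.trans_le hx.1, hx.2⟩) fun x hx => hF x ?_
  by_contra! hax
  exact hx.2 ⟨hax, hx.1.2⟩

variable {u : ℝ → E} {a b : ℝ}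

lemma isDirichletC1_of_tsupport_subset (hu : ContDiff ℝ 1 u) (hsupp : tsupport u ⊆ Set.Ioo a b) :
    IsDirichletC1 a b u where
  differentiableOn := (hu.differentiable one_ne_zero).differentiableOn
  continuousOn_deriv := (hu.continuous_deriv le_rfl).continuousOn
  left_eq_zero := image_eq_zero_of_notMem_tsupport fun h => (hsupp h).1.false
  right_eq_zero := image_eq_zero_of_notMem_tsupport fun h => (hsupp h).2.false

lemma integrable_powGauss_smul (hu : Continuous u) (hsupp : tsupport u ⊆ Set.Ioo 0 b) (c s : ℝ) :
    Integrable fun r => powGauss c s r • u r := by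
  have hsub := tsupport_smul_subset_right (powGauss c s) u
  have hcont : Continuous fun r => powGauss c s r • u r := continuous_of_tsupport fun r hr =>
    (hasDerivAt_powGauss c s (hsupp (hsub hr)).1).continuousAt.smul hu.continuousAt
  have hcomp : HasCompactSupport u := isCompact_Icc.of_isClosed_subset (isClosed_tsupport u)
    (hsupp.trans Set.Ioo_subset_Icc_self)
  exact hcont.integrable_of_hasCompactSupport (hcomp.mono' (subset_closure.trans hsub))

end SupportedFunctions

lemma exists_mem_ne_zero_forall_integral_smul_eq_zero {𝕜 α ι : Type*} [RCLike 𝕜]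
    [Fintype ι] [MeasurableSpace α] {μ : Measure α} {V : Submodule 𝕜 (α → 𝕜)} (w : ι → α → ℝ)
    (hint : ∀ u ∈ V, ∀ i, Integrable (fun x => w i x • u x) μ)
    (hdim : Fintype.card ι < Module.finrank 𝕜 V) :
    ∃ u ∈ V, u ≠ 0 ∧ ∀ i, ∫ x, w i x • u x ∂μ = 0 := by
  let moments : V →ₗ[𝕜] ι → 𝕜 :=
    { toFun := fun u i => ∫ x, w i x • u.1 x ∂μ
      map_add' := fun u v => funext fun i => by
        simp only [Submodule.coe_add, Pi.add_apply, smul_add]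
        exact integral_add (hint u u.2 i) (hint v v.2 i)
      map_smul' := fun z u => funext fun i => by
        simp only [Submodule.coe_smul, Pi.smul_apply, smul_comm _ z, RingHom.id_apply]
        exact integral_smul z _ }
  have : FiniteDimensional 𝕜 V := Module.finite_of_finrank_pos (Nat.zero_lt_of_lt hdim)
  have hker : LinearMap.ker moments ≠ ⊥ := LinearMap.ker_ne_bot_of_finrank_lt (by simpa using hdim)
  obtain ⟨u, hu, hu₀⟩ := (Submodule.ne_bot_iff _).1 hker
  exact ⟨u, u.2, fun h => hu₀ (Subtype.ext h), congrFun (LinearMap.mem_ker.1 hu)⟩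

section Fiber

variable {R a B h : ℝ} {m : ℤ} {u : ℝ → ℂ}

lemma qm_eq_integral_norm_annihilation_sq (hh : h ≠ 0) (ha : 0 < a) (haR : a ≤ R)
    (hu : ContDiff ℝ 1 u) (hsupp : tsupport u ⊆ Set.Ioo a R) :
    qm R B h m u = h ^ 2 * ∫ r in a..R, ‖annihilation (B / (2 * h)) m u r‖ ^ 2 * r := by
  have hu₀ (r : ℝ) (hr : r < a) : u r = 0 :=
    Function.support_subset_iff'.1 ((subset_tsupport u).trans hsupp) r fun h => hr.not_gt h.1
  have hu₁ (r : ℝ) (hr : r < a) : deriv u r = 0 :=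
    Function.support_subset_iff'.1 (support_deriv_subset.trans hsupp) r fun h => hr.not_gt h.1
  have hpot (r : ℝ) : B * r / (2 * h) = B / (2 * h) * r := by ring
  have hcoef : h ^ 2 * (2 * (B / (2 * h))) = h * B := by field_simp
  have hI : Set.uIcc a R ⊆ Set.Ioi 0 := Set.ordConnected_Ioi.uIcc_subset ha (ha.trans_le haR)
  rw [integral_norm_annihilation_sq hI (isDirichletC1_of_tsupport_subset hu hsupp), qm,
    setIntegral_Ioo_eq_intervalIntegral ha haR fun r hr => by simp [hu₀ r hr, hu₁ r hr],
    setIntegral_Ioo_eq_intervalIntegral ha haR fun r hr => by simp [hu₀ r hr],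
    mul_sub, ← mul_assoc, hcoef]
  simp only [drift, hpot]

lemma mul_integral_norm_sq_le_qm {k : ℕ} (hh : h ≠ 0) (hR : 0 < R) (hu : ContDiff ℝ 1 u)
    (hsupp : tsupport u ⊆ Set.Ioo 0 R)
    (horth : ∀ j < k, ∫ r in Set.Ioo 0 R, powGauss (B / (2 * h)) (m + 2 * j + 1) r • u r = 0) :
    2 * h * B * k * ∫ r in Set.Ioo 0 R, ‖u r‖ ^ 2 * r ≤ qm R B h m u := by
  obtain ⟨a, ⟨ha, haR⟩, hsupp_a⟩ :=
    exists_subset_Ioo_of_isClosed_of_subset_Ioo (isClosed_tsupport u) hR hsupp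
  have hu₀ (r : ℝ) (hr : r < a) : u r = 0 :=
    Function.support_subset_iff'.1 ((subset_tsupport u).trans hsupp_a) r fun h => hr.not_gt h.1
  have hbound := mul_integral_norm_sq_le_integral_norm_annihilation_sq (c := B / (2 * h))
    (s := m) ha haR.le k (isDirichletC1_of_tsupport_subset hu hsupp_a) fun j hj => by
      rw [← setIntegral_Ioo_eq_intervalIntegral ha haR.le fun r hr => by simp [hu₀ r hr]]
      exact horth j hj
  rw [qm_eq_integral_norm_annihilation_sq hh ha haR.le hu hsupp_a,
    setIntegral_Ioo_eq_intervalIntegral ha haR.le fun r hr => by simp [hu₀ r hr]]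
  calc 2 * h * B * k * ∫ r in a..R, ‖u r‖ ^ 2 * r
      = h ^ 2 * (4 * (B / (2 * h)) * k * ∫ r in a..R, ‖u r‖ ^ 2 * r) := by field_simp; ring
    _ ≤ _ := by gcongr

end Fiber

theorem stmt10_general {R B h : ℝ} (hh : h ≠ 0) (m : ℤ) {k : ℕ} (V : Submodule ℂ (ℝ → ℂ))
    (hV : ∀ u ∈ V, ContDiff ℝ 1 u ∧ tsupport u ⊆ Set.Ioo 0 R)
    (hdim : k < Module.finrank ℂ V) :
    ∃ u ∈ V, u ≠ 0 ∧
      2 * h * B * k * ∫ r in Set.Ioo (0 : ℝ) R, ‖u r‖ ^ 2 * r ≤ qm R B h m u := by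
  obtain ⟨u, huV, hu_ne, horth⟩ := exists_mem_ne_zero_forall_integral_smul_eq_zero
    (V := V) (μ := volume.restrict (Set.Ioo 0 R))
    (fun j : Fin k => powGauss (B / (2 * h)) (m + 2 * (j : ℕ) + 1))
    (fun u hu _ => (integrable_powGauss_smul (hV u hu).1.continuous (hV u hu).2 _ _).restrict)
    (by simpa using hdim)
  obtain ⟨hu, hsupp⟩ := hV u huV
  obtain ⟨r, hr⟩ := Function.ne_iff.1 hu_ne
  have hr_mem : r ∈ Set.Ioo 0 R := hsupp (subset_tsupport u hr)
  exact ⟨u, huV, hu_ne, mul_integral_norm_sq_le_qm hh (hr_mem.1.trans hr_mem.2) hu hsupp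
    fun j hj => horth ⟨j, hj⟩⟩

/-- min-max form: for `m ≥ 0` and `k ≥ 1`, on every `(k+1)`-dimensional
complex subspace of `C_c^∞((0,R);ℂ)` there is a nonzero `u` with
`q_m(u) ≥ 2hBk ∫₀^R |u|² r dr`. -/
theorem stmt10 (R B h : ℝ) (hR : 0 < R) (hB : 0 < B) (hh : 0 < h)
    (m : ℕ) (k : ℕ) (hk : 1 ≤ k)
    (V : Submodule ℂ (ℝ → ℂ))
    (hV : ∀ u ∈ V, IsCptSmooth0R R u)
    (hdim : Module.finrank ℂ V = k + 1) :
    ∃ u ∈ V, u ≠ 0 ∧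
      qm R B h (m : ℤ) u ≥ 2 * h * B * k *
        ∫ r in Set.Ioo (0:ℝ) R, ‖u r‖ ^ 2 * r := by
  exact stmt10_general hh.ne' m V
    (fun u hu => ⟨(hV u hu).1.of_le (by simp), (hV u hu).2.2⟩) (by lia)
end
end

section
/- Let R > 0, B > 0 and let m ≥ 0 be an integer. Then there exist constants C > 0 and h₀ > 0 such that for all 0 < h < h₀, the bottom μ_m(h) of the fiber quadratic form at angular momentum m satisfies |μ_m(h) − 2hB·(BR²/(2h))^{m+1}/m! · e^{−BR²/(2h)}| ≤ C h · 2hB·(BR²/(2h))^{m+1}/m! · e^{−BR²/(2h)}; that is, μ_m(h) = 2hB (BR²/(2h))^{m+1}/m! · e^{−BR²/(2h)} (1 + O(h)) as h → 0⁺. -/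
open MeasureTheory Filter Topology

noncomputable section

/-- The bottom of the fiber quadratic form at angular momentum `m`. -/
def mum (R B h : ℝ) (m : ℤ) : ℝ :=
  sInf { c | ∃ u : ℝ → ℂ, IsCptSmooth0R R u ∧ u ≠ 0 ∧
    c = qm R B h m u / ∫ r in Set.Ioo (0:ℝ) R, ‖u r‖ ^ 2 * r }

/-!
With `κ = B / (2h)`, the function `φ = r ^ m e^{-κ r² / 2}` is annihilated by the first-order factor
of the fiber operator, and the substitution `u = φ v` turns `q_m(u)` into `h² ∫ |v′|² ρ` and
`∫ |u|² r dr` into `∫ |v|² ρ`, with `ρ = φ² r`. Hence `μ_m(h) = h² Λ`, where `Λ` is the first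
Dirichlet eigenvalue of `-ρ⁻¹ (ρ v′)′` on `(0, R)`. Let `S = κ R² = B R² / (2h)`.

* Lower bound: if `-(ρ f′)′ = k ρ` with `f > 0`, then `Λ ≥ k / sup f` (Barta′s inequality). In the
  variable `s = κ r²` this torsion function is `f = ∫_s^S t^{-m-1} ∑_{k > m} t ^ k / k! dt`, and
  `sup f = S^{-m-1} e^S (1 + O(1 / S))`.
* Upper bound: `1 - e^{-κ (R² - r²)}` is a trial function, after cutting off logarithmically at both
  ends. Its energy is at most `2 κ R^{2m+2} e^{-S}`, its squared norm is
  `m! / (2 κ ^ (m + 1)) · (1 + O(1 / S))`.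

Both bounds have leading term `4 κ S ^ (m + 1) / m! · e^{-S}`, and `1 / S = O(h)`.
-/

open Set
open scoped ContDiff Nat

section ExpTail

/-- The tail `∑_{k ≥ n} t ^ k / k!` of the exponential series, encoded as `exp t` minus a partial
sum. For `n = m + 1` it is `e^t / m!` times the lower incomplete Gamma function `γ(m + 1, t)`. -/
def expTail (n : ℕ) (t : ℝ) : ℝ :=
  Real.exp t - ∑ k ∈ Finset.range n, t ^ k / k !

lemma expTail_eq_add_expTail_succ (n : ℕ) (t : ℝ) :
    expTail n t = t ^ n / n ! + expTail (n + 1) t := by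
  simp only [expTail, Finset.sum_range_succ]; ring

lemma expTail_succ_zero (n : ℕ) : expTail (n + 1) 0 = 0 := by
  simp [expTail, Finset.sum_range_succ']

lemma expTail_nonneg (n : ℕ) {t : ℝ} (ht : 0 ≤ t) : 0 ≤ expTail n t :=
  sub_nonneg.2 (Real.sum_le_exp_of_nonneg ht n)

lemma expTail_pos (n : ℕ) {t : ℝ} (ht : 0 < t) : 0 < expTail n t := by
  rw [expTail_eq_add_expTail_succ]
  have := expTail_nonneg (n + 1) ht.le
  positivity

lemma expTail_le_exp (n : ℕ) {t : ℝ} (ht : 0 ≤ t) : expTail n t ≤ Real.exp t :=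
  sub_le_self _ (Finset.sum_nonneg fun k _ => by positivity)

@[fun_prop]
lemma continuous_expTail (n : ℕ) : Continuous (expTail n) := by
  unfold expTail; fun_prop

lemma hasDerivAt_pow_succ_div_factorial (n : ℕ) (t : ℝ) :
    HasDerivAt (fun x : ℝ => x ^ (n + 1) / (n + 1)!) (t ^ n / n !) t := by
  refine ((hasDerivAt_pow (n + 1) t).div_const _).congr_deriv ?_
  rw [Nat.factorial_succ]
  push_cast
  field_simp

lemma hasDerivAt_expTail_succ (n : ℕ) (t : ℝ) :
    HasDerivAt (expTail (n + 1)) (expTail n t) t := by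
  have h : ∀ x, expTail (n + 1) x =
      (Real.exp x - ∑ k ∈ Finset.range n, x ^ (k + 1) / (k + 1)!) - 1 := fun x => by
    rw [expTail, Finset.sum_range_succ']; simp [sub_sub]
  rw [funext h]
  exact ((Real.hasDerivAt_exp t).sub
    (HasDerivAt.fun_sum fun k _ => hasDerivAt_pow_succ_div_factorial k t)).sub_const 1

/-- Termwise this is `(n + 1) t ^ (k + 1) / (k + 1)! ≤ t · t ^ k / k!` for `k ≥ n`. The proof
differentiates the difference, which lowers `n` by one. -/
lemma succ_mul_expTail_succ_le (n : ℕ) {t : ℝ} (ht : 0 ≤ t) :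
    (n + 1) * expTail (n + 1) t ≤ t * expTail n t := by
  induction n generalizing t with
  | zero =>
    have h : Real.exp t * (1 - t) ≤ Real.exp t * Real.exp (-t) := by
      gcongr; exact Real.one_sub_le_exp_neg t
    rw [← Real.exp_add, add_neg_cancel, Real.exp_zero] at h
    simp only [expTail, Finset.sum_range_succ, Finset.sum_range_zero]
    norm_num
    linarith
  | succ n ih =>
    have hderiv (x : ℝ) : HasDerivAt
        (fun x => x * expTail (n + 1) x - ((n : ℝ) + 1 + 1) * expTail (n + 1 + 1) x)
        (x * expTail n x - (n + 1) * expTail (n + 1) x) x := by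
      refine (((hasDerivAt_id x).mul (hasDerivAt_expTail_succ n x)).sub
        ((hasDerivAt_expTail_succ (n + 1) x).const_mul ((n : ℝ) + 1 + 1))).congr_deriv ?_
      simp only [id]; ring
    have hmono := monotoneOn_of_hasDerivWithinAt_nonneg (convex_Ici (0 : ℝ))
      (fun x _ => (hderiv x).continuousAt.continuousWithinAt)
      (fun x _ => (hderiv x).hasDerivWithinAt)
      (fun x hx => sub_nonneg.2 (ih (interior_subset hx)))
    have := hmono self_mem_Ici ht ht
    simp only [expTail_succ_zero] at this
    push_cast
    linarith

lemma mul_exp_sub_le_mul_expTail (n : ℕ) {t : ℝ} (ht : 0 ≤ t) :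
    (t - n) * Real.exp t ≤ t * expTail n t := by
  have hterm : ∀ k ∈ Finset.range n, t * (t ^ k / k !) ≤ n * (t ^ (k + 1) / (k + 1)!) := by
    intro k hk
    have hkn : (k + 1 : ℝ) ≤ n := by exact_mod_cast Finset.mem_range.1 hk
    calc t * (t ^ k / k !) = (k + 1) * (t ^ (k + 1) / (k + 1)!) := by
          rw [Nat.factorial_succ]; push_cast; field_simp; ring
      _ ≤ n * (t ^ (k + 1) / (k + 1)!) := by gcongr
  have hshift : ∑ k ∈ Finset.range n, t ^ (k + 1) / (k + 1)! ≤ Real.exp t := by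
    refine le_trans ?_ (Real.sum_le_exp_of_nonneg ht (n + 1))
    rw [Finset.sum_range_succ']
    simp
  have hsum : t * ∑ k ∈ Finset.range n, t ^ k / k ! ≤ n * Real.exp t := by
    rw [Finset.mul_sum]
    refine (Finset.sum_le_sum hterm).trans ?_
    rw [← Finset.mul_sum]
    gcongr
  rw [expTail]
  linarith

lemma hasDerivAt_expTail_succ_div_pow (n k : ℕ) {t : ℝ} (ht : t ≠ 0) :
    HasDerivAt (fun x => expTail (n + 1) x / x ^ k)
      (expTail n t / t ^ k - k * (expTail (n + 1) t / t ^ (k + 1))) t := by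
  refine ((hasDerivAt_expTail_succ n t).div (hasDerivAt_pow k t) (by positivity)).congr_deriv ?_
  rcases k with _ | k
  · simp
  · push_cast
    field_simp
    ring

/-- The integral `∫_s^S t⁻ⁿ (∑_{k ≥ n} t ^ k / k!) dt`. As a function of `s` it is, up to a constant
factor, the solution of `s f′' + (n - s) f′ = -const` that is regular at `0` and vanishes at `S`;
this is the torsion function of the Laguerre operator on `(0, S)`. -/
def expTailIntegral (n : ℕ) (S s : ℝ) : ℝ := ∫ t in s..S, expTail n t / t ^ n

variable {n : ℕ} {s S : ℝ}

lemma continuousOn_expTail_div_pow (n : ℕ) :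
    ContinuousOn (fun t => expTail n t / t ^ n) (Ioi 0) :=
  (continuous_expTail n).continuousOn.div (by fun_prop) fun _ ht => pow_ne_zero n (ne_of_gt ht)

lemma intervalIntegrable_expTail_div_pow (hs : 0 < s) (hsS : s ≤ S) :
    IntervalIntegrable (fun t => expTail n t / t ^ n) volume s S := by
  refine ((continuousOn_expTail_div_pow n).mono ?_).intervalIntegrable
  rw [uIcc_of_le hsS]
  exact Icc_subset_Ioi_iff hsS |>.2 hs

lemma hasDerivAt_expTailIntegral (hs : 0 < s) (hsS : s ≤ S) :
    HasDerivAt (expTailIntegral n S) (-(expTail n s / s ^ n)) s :=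
  intervalIntegral.integral_hasDerivAt_left (intervalIntegrable_expTail_div_pow hs hsS)
    ((continuousOn_expTail_div_pow n).stronglyMeasurableAtFilter isOpen_Ioi s hs)
    ((continuousOn_expTail_div_pow n).continuousAt (Ioi_mem_nhds hs))

lemma expTailIntegral_pos (hs : 0 < s) (hsS : s < S) : 0 < expTailIntegral n S s :=
  intervalIntegral.intervalIntegral_pos_of_pos_on (intervalIntegrable_expTail_div_pow hs hsS.le)
    (fun _ ht => div_pos (expTail_pos n (hs.trans ht.1)) (pow_pos (hs.trans ht.1) n)) hsS

/-- The correction `n (n + 2) T_{n+2}(t) / t ^ (n+1)`, with `T_k = expTail k`, turns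
`T_{n+1}(t) / t ^ n` into the primitive of a function that dominates `T_n(t) / t ^ n`. -/
lemma expTailIntegral_le (n : ℕ) (hs : 0 < s) (hsS : s ≤ S) :
    expTailIntegral n S s ≤ Real.exp S / S ^ n * (1 + n * (n + 2) / S) := by
  have hS : 0 < S := hs.trans_le hsS
  set D : ℝ → ℝ := fun t =>
    expTail (n + 1) t / t ^ n + n * (n + 2) * (expTail (n + 1 + 1) t / t ^ (n + 1)) with hD
  have hderiv (t : ℝ) (ht : 0 < t) : HasDerivAt D
      (expTail n t / t ^ n +
        n * (n + 1) / t ^ (n + 2) * (t * expTail (n + 1) t - (n + 2) * expTail (n + 2) t)) t := by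
    refine ((hasDerivAt_expTail_succ_div_pow n n ht.ne').add
      ((hasDerivAt_expTail_succ_div_pow (n + 1) (n + 1) ht.ne').const_mul _)).congr_deriv ?_
    push_cast
    field_simp
    ring
  have hdom (t : ℝ) (ht : 0 < t) : expTail n t / t ^ n ≤ expTail n t / t ^ n +
      n * (n + 1) / t ^ (n + 2) * (t * expTail (n + 1) t - (n + 2) * expTail (n + 2) t) := by
    have := succ_mul_expTail_succ_le (n + 1) ht.le
    push_cast at this
    exact le_add_of_nonneg_right (mul_nonneg (by positivity) (by linarith))
  have hDs : 0 ≤ D s := by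
    have := expTail_nonneg (n + 1) hs.le
    have := expTail_nonneg (n + 1 + 1) hs.le
    positivity
  have hint : IntegrableOn (fun t => expTail n t / t ^ n) (Icc s S) :=
    ((continuousOn_expTail_div_pow n).mono (Icc_subset_Ioi_iff hsS |>.2 hs)).integrableOn_Icc
  calc expTailIntegral n S s ≤ D S - D s :=
        intervalIntegral.integral_le_sub_of_hasDeriv_right_of_le hsS
          (fun t ht => (hderiv t (hs.trans_le ht.1)).continuousAt.continuousWithinAt)
          (fun t ht => (hderiv t (hs.trans ht.1)).hasDerivWithinAt) hint
          (fun t ht => hdom t (hs.trans ht.1))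
    _ ≤ D S := sub_le_self _ hDs
    _ ≤ Real.exp S / S ^ n + n * (n + 2) * (Real.exp S / S ^ (n + 1)) := by
        simp only [hD]
        gcongr <;> exact expTail_le_exp _ hS.le
    _ = Real.exp S / S ^ n * (1 + n * (n + 2) / S) := by
        field_simp
        ring

end ExpTail

section CompactSupport

variable {E : Type*} [NormedAddCommGroup E] {a b : ℝ}

lemma hasCompactSupport_of_tsupport_subset_Ioo {F : ℝ → E} (hF : tsupport F ⊆ Ioo a b) :
    HasCompactSupport F :=
  HasCompactSupport.of_support_subset_isCompact isCompact_Icc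
    ((subset_tsupport F).trans (hF.trans Ioo_subset_Icc_self))

lemma integrable_of_continuousOn_of_tsupport_subset_Ioo {F : ℝ → E}
    (hc : ContinuousOn F (Ioo a b)) (hF : tsupport F ⊆ Ioo a b) : Integrable F :=
  (hc.continuous_of_tsupport_subset isOpen_Ioo hF).integrable_of_hasCompactSupport
    (hasCompactSupport_of_tsupport_subset_Ioo hF)

lemma tsupport_norm_sq_mul_subset (v : ℝ → E) (ρ : ℝ → ℝ) :
    tsupport (fun r => ‖v r‖ ^ 2 * ρ r) ⊆ tsupport v :=
  closure_mono fun r hr hv => hr (by simp [show v r = 0 from hv])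

lemma integrableOn_norm_sq_mul {v : ℝ → E} {ρ : ℝ → ℝ} (hv : Continuous v)
    (hsupp : tsupport v ⊆ Ioo a b) (hρ : ContinuousOn ρ (Ioo a b)) :
    IntegrableOn (fun r => ‖v r‖ ^ 2 * ρ r) (Ioo a b) := by
  have hcont : ContinuousOn (fun r => ‖v r‖ ^ 2 * ρ r) (Ioo a b) :=
    (hv.norm.pow 2).continuousOn.mul hρ
  exact (integrable_of_continuousOn_of_tsupport_subset_Ioo hcont
    ((tsupport_norm_sq_mul_subset v ρ).trans hsupp)).integrableOn

section Derivative

variable [NormedSpace ℝ E] {F F' : ℝ → E}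

lemma integrableOn_deriv_of_tsupport_subset_Ioo
    (hderiv : ∀ r ∈ Ioo a b, HasDerivAt F (F' r) r) (hcont : ContinuousOn F' (Ioo a b))
    (hF : tsupport F ⊆ Ioo a b) : IntegrableOn F' (Ioo a b) := by
  have heq : EqOn (deriv F) F' (Ioo a b) := fun r hr => (hderiv r hr).deriv
  refine IntegrableOn.congr_fun ?_ heq measurableSet_Ioo
  exact (integrable_of_continuousOn_of_tsupport_subset_Ioo (hcont.congr heq)
    ((tsupport_deriv_subset).trans hF)).integrableOn

lemma integral_deriv_eq_zero_of_tsupport_subset_Ioo [CompleteSpace E] (hab : a ≤ b)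
    (hderiv : ∀ r ∈ Ioo a b, HasDerivAt F (F' r) r) (hcont : ContinuousOn F' (Ioo a b))
    (hF : tsupport F ⊆ Ioo a b) : ∫ r in Ioo a b, F' r = 0 := by
  have hFc : Continuous F := ContinuousOn.continuous_of_tsupport_subset
    (fun r hr => (hderiv r hr).continuousAt.continuousWithinAt) isOpen_Ioo hF
  have hFa : F a = 0 := image_eq_zero_of_notMem_tsupport fun h => lt_irrefl _ (hF h).1
  have hFb : F b = 0 := image_eq_zero_of_notMem_tsupport fun h => lt_irrefl _ (hF h).2
  have hint : IntervalIntegrable F' volume a b := by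
    rw [intervalIntegrable_iff_integrableOn_Ioo_of_le hab]
    exact integrableOn_deriv_of_tsupport_subset_Ioo hderiv hcont hF
  rw [← integral_Ioc_eq_integral_Ioo, ← intervalIntegral.integral_of_le hab,
    intervalIntegral.integral_eq_sub_of_hasDerivAt_of_le hab hFc.continuousOn hderiv hint,
    hFa, hFb, sub_zero]

end Derivative

end CompactSupport

section Riccati

variable {E : Type*} [NormedAddCommGroup E] [InnerProductSpace ℝ E] {a b Λ : ℝ}
  {v : ℝ → E} {σ ρ c c' : ℝ → ℝ}

lemma hasDerivAt_norm_sq_mul {r c₁ : ℝ} (hv : DifferentiableAt ℝ v r) (hc : HasDerivAt c c₁ r) :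
    HasDerivAt (fun x => ‖v x‖ ^ 2 * c x)
      (2 * inner ℝ (v r) (deriv v r) * c r + ‖v r‖ ^ 2 * c₁) r :=
  hv.hasDerivAt.norm_sq.mul hc

lemma two_mul_inner_mul_sub_le (x y : E) {w : ℝ} (hw : 0 < w) (c : ℝ) :
    2 * inner ℝ x y * c - ‖x‖ ^ 2 * (c ^ 2 / w) ≤ ‖y‖ ^ 2 * w := by
  have hsq : ‖y - (c / w) • x‖ ^ 2 * w =
      ‖y‖ ^ 2 * w - (2 * inner ℝ x y * c - ‖x‖ ^ 2 * (c ^ 2 / w)) := by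
    rw [norm_sub_sq_real, real_inner_smul_right, norm_smul, mul_pow, Real.norm_eq_abs, sq_abs,
      real_inner_comm]
    field_simp
    ring
  have : 0 ≤ ‖y - (c / w) • x‖ ^ 2 * w := by positivity
  linarith

lemma mul_integral_norm_sq_le_of_riccati (hab : a ≤ b) (hv : ContDiff ℝ 1 v)
    (hsupp : tsupport v ⊆ Ioo a b) (hσ : ContinuousOn σ (Ioo a b)) (hσ0 : ∀ r ∈ Ioo a b, 0 < σ r)
    (hρ : ContinuousOn ρ (Ioo a b)) (hc : ∀ r ∈ Ioo a b, HasDerivAt c (c' r) r)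
    (hc' : ContinuousOn c' (Ioo a b))
    (hriccati : ∀ r ∈ Ioo a b, c' r + c r ^ 2 / σ r + Λ * ρ r ≤ 0) :
    Λ * ∫ r in Ioo a b, ‖v r‖ ^ 2 * ρ r ≤ ∫ r in Ioo a b, ‖deriv v r‖ ^ 2 * σ r := by
  have hvd := hv.continuous_deriv le_rfl
  have hvc := hv.continuous
  set F' : ℝ → ℝ := fun r => 2 * inner ℝ (v r) (deriv v r) * c r + ‖v r‖ ^ 2 * c' r with hF'
  have hderiv : ∀ r ∈ Ioo a b, HasDerivAt (fun x => ‖v x‖ ^ 2 * c x) (F' r) r := fun r hr =>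
    hasDerivAt_norm_sq_mul (hv.differentiable one_ne_zero r) (hc r hr)
  have hF'c : ContinuousOn F' (Ioo a b) := by
    have hcc : ContinuousOn c (Ioo a b) := fun r hr => (hc r hr).continuousAt.continuousWithinAt
    fun_prop
  have hF : tsupport (fun x => ‖v x‖ ^ 2 * c x) ⊆ Ioo a b :=
    (tsupport_norm_sq_mul_subset v c).trans hsupp
  have hpointwise : ∀ r ∈ Ioo a b,
      Λ * (‖v r‖ ^ 2 * ρ r) + F' r ≤ ‖deriv v r‖ ^ 2 * σ r := fun r hr => by
    have hsq := two_mul_inner_mul_sub_le (v r) (deriv v r) (hσ0 r hr) (c r)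
    have hric := mul_le_mul_of_nonneg_left (hriccati r hr) (sq_nonneg ‖v r‖)
    simp only [hF']
    linarith
  have hvint := (integrableOn_norm_sq_mul hvc hsupp hρ).const_mul Λ
  have hF'int := integrableOn_deriv_of_tsupport_subset_Ioo hderiv hF'c hF
  have hv'int := integrableOn_norm_sq_mul hvd ((tsupport_deriv_subset).trans hsupp) hσ
  calc Λ * ∫ r in Ioo a b, ‖v r‖ ^ 2 * ρ r
      = ∫ r in Ioo a b, (Λ * (‖v r‖ ^ 2 * ρ r) + F' r) := by
        rw [integral_add hvint hF'int, integral_const_mul,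
          integral_deriv_eq_zero_of_tsupport_subset_Ioo hab hderiv hF'c hF, add_zero]
    _ ≤ ∫ r in Ioo a b, ‖deriv v r‖ ^ 2 * σ r :=
        setIntegral_mono_on (Integrable.fun_add hvint hF'int) hv'int measurableSet_Ioo hpointwise

/-- A positive supersolution `f` of the torsion problem `-(ρ f′)′ = k ρ` yields the Riccati solution
`c = ρ f′ / f`. -/
lemma mul_integral_norm_sq_le_of_torsion {P f : ℝ → ℝ} {k : ℝ} (hab : a ≤ b) (hv : ContDiff ℝ 1 v)
    (hsupp : tsupport v ⊆ Ioo a b) (hρ : ContinuousOn ρ (Ioo a b)) (hρ0 : ∀ r ∈ Ioo a b, 0 < ρ r)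
    (hP : ∀ r ∈ Ioo a b, HasDerivAt P (ρ r) r)
    (hf : ∀ r ∈ Ioo a b, HasDerivAt f (-(k * P r / ρ r)) r) (hf0 : ∀ r ∈ Ioo a b, 0 < f r)
    (hΛ : ∀ r ∈ Ioo a b, Λ * f r ≤ k) :
    Λ * ∫ r in Ioo a b, ‖v r‖ ^ 2 * ρ r ≤ ∫ r in Ioo a b, ‖deriv v r‖ ^ 2 * ρ r := by
  have hPc : ContinuousOn P (Ioo a b) := fun r hr => (hP r hr).continuousAt.continuousWithinAt
  have hfc : ContinuousOn f (Ioo a b) := fun r hr => (hf r hr).continuousAt.continuousWithinAt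
  refine mul_integral_norm_sq_le_of_riccati (c := fun r => -(k * P r / f r))
    (c' := fun r => -(k * ρ r / f r) - (k * P r / f r) ^ 2 / ρ r) hab hv hsupp hρ hρ0 hρ
    (fun r hr => ?_) ?_ fun r hr => ?_
  · have hρr := (hρ0 r hr).ne'
    have hfr := (hf0 r hr).ne'
    refine (((hP r hr).const_mul k).div (hf r hr) hfr).neg.congr_deriv ?_
    field_simp
    ring
  · have hρne : ∀ r ∈ Ioo a b, ρ r ≠ 0 := fun r hr => (hρ0 r hr).ne'
    have hfne : ∀ r ∈ Ioo a b, f r ≠ 0 := fun r hr => (hf0 r hr).ne'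
    fun_prop (disch := assumption)
  · have hle : Λ ≤ k / f r := (le_div_iff₀ (hf0 r hr)).2 (hΛ r hr)
    have := mul_le_mul_of_nonneg_right hle (hρ0 r hr).le
    rw [neg_sq, sub_add_cancel, mul_div_right_comm]
    linarith

end Riccati

section TestFunctions

variable {R : ℝ} {u v : ℝ → ℂ}

lemma IsCptSmooth0R.of_tsupport_subset (hu : ContDiff ℝ ∞ u) (hsupp : tsupport u ⊆ Ioo 0 R) :
    IsCptSmooth0R R u :=
  ⟨hu, hasCompactSupport_of_tsupport_subset_Ioo hsupp, hsupp⟩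

lemma IsCptSmooth0R.smul (hv : IsCptSmooth0R R v) {g : ℝ → ℝ} (hg : ContDiffOn ℝ ∞ g (Ioo 0 R)) :
    IsCptSmooth0R R (fun r => g r • v r) := by
  have hsub : tsupport (fun r => g r • v r) ⊆ tsupport v := tsupport_smul_subset_right g v
  refine .of_tsupport_subset (contDiff_iff_contDiffAt.2 fun r => ?_) (hsub.trans hv.2.2)
  by_cases hr : r ∈ tsupport v
  · exact (hg.contDiffAt (isOpen_Ioo.mem_nhds (hv.2.2 hr))).smul hv.1.contDiffAt
  · exact contDiffAt_const.congr_of_eventuallyEq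
      (notMem_tsupport_iff_eventuallyEq.1 fun h => hr (hsub h))

lemma IsCptSmooth0R.apply_eq_zero (hu : IsCptSmooth0R R u) {r : ℝ} (hr : r ∉ Ioo 0 R) : u r = 0 :=
  image_eq_zero_of_notMem_tsupport fun h => hr (hu.2.2 h)

lemma exists_isCptSmooth0R_ne_zero (hR : 0 < R) : ∃ u : ℝ → ℂ, IsCptSmooth0R R u ∧ u ≠ 0 := by
  obtain ⟨f, hsupp, -, hf, -, hf1⟩ := exists_contDiff_tsupport_subset (n := ⊤)
    (Ioo_mem_nhds (half_pos hR) (half_lt_self hR))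
  refine ⟨fun r => (f r : ℂ), .of_tsupport_subset (Complex.ofRealCLM.contDiff.comp hf)
    ((tsupport_comp_subset Complex.ofReal_zero f).trans hsupp), fun h0 => ?_⟩
  simpa [hf1] using congrFun h0 (R / 2)

lemma IsCptSmooth0R.integral_norm_sq_mul_self_pos (hu : IsCptSmooth0R R u) (hne : u ≠ 0) :
    0 < ∫ r in Ioo 0 R, ‖u r‖ ^ 2 * r := by
  have hc := hu.1.continuous
  obtain ⟨r₀, hr₀⟩ := Function.ne_iff.1 hne
  have hr₀mem : r₀ ∈ Ioo 0 R := by_contra fun h => hr₀ (hu.apply_eq_zero h)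
  rw [setIntegral_eq_integral_of_forall_compl_eq_zero fun r hr => by simp [hu.apply_eq_zero hr]]
  refine Continuous.integral_pos_of_hasCompactSupport_nonneg_nonzero (x := r₀) (by fun_prop)
    (hu.2.1.mono fun r hr hur => hr (by simp [hur])) (fun r => ?_)
    (mul_ne_zero (pow_ne_zero 2 (norm_ne_zero_iff.2 hr₀)) hr₀mem.1.ne')
  by_cases hr : r ∈ Ioo 0 R
  · exact mul_nonneg (sq_nonneg _) hr.1.le
  · simp [hu.apply_eq_zero hr]

/-- `Λ` bounds from below the Rayleigh quotients of `-ρ⁻¹ (ρ v′)′` on `(0, R)` with Dirichlet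
conditions at both ends, expressed on test functions. -/
def IsDirichletBound (R : ℝ) (ρ : ℝ → ℝ) (Λ : ℝ) : Prop :=
  ∀ v : ℝ → ℂ, IsCptSmooth0R R v →
    Λ * ∫ r in Ioo 0 R, ‖v r‖ ^ 2 * ρ r ≤ ∫ r in Ioo 0 R, ‖deriv v r‖ ^ 2 * ρ r

end TestFunctions

section GroundState

/-- The zero mode `r ^ m e^{-κ r² / 2}`, which with `κ = B / (2h)` is annihilated by the first-order
factor `u′ - (m / r - B r / (2h)) u` of the fiber operator. -/
def zeroMode (κ : ℝ) (m : ℕ) (r : ℝ) : ℝ := r ^ m * Real.exp (-(κ * r ^ 2 / 2))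

/-- The density of the zero mode against the radial measure `r dr`. -/
def landauWeight (κ : ℝ) (m : ℕ) (r : ℝ) : ℝ := r ^ (2 * m + 1) * Real.exp (-(κ * r ^ 2))

variable {R κ r : ℝ} {m : ℕ} {u v : ℝ → ℂ}

lemma zeroMode_sq_mul_self (κ : ℝ) (m : ℕ) (r : ℝ) :
    zeroMode κ m r ^ 2 * r = landauWeight κ m r := by
  rw [zeroMode, landauWeight, mul_pow, ← Real.exp_nat_mul]
  push_cast
  rw [show (2 : ℝ) * -(κ * r ^ 2 / 2) = -(κ * r ^ 2) by ring]
  ring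

lemma zeroMode_pos (κ : ℝ) (m : ℕ) (hr : 0 < r) : 0 < zeroMode κ m r := by
  unfold zeroMode; positivity

lemma landauWeight_pos (κ : ℝ) (m : ℕ) (hr : 0 < r) : 0 < landauWeight κ m r := by
  unfold landauWeight; positivity

@[fun_prop]
lemma contDiff_zeroMode (κ : ℝ) (m : ℕ) : ContDiff ℝ ∞ (zeroMode κ m) := by
  unfold zeroMode; fun_prop

@[fun_prop]
lemma continuous_landauWeight (κ : ℝ) (m : ℕ) : Continuous (landauWeight κ m) := by
  unfold landauWeight; fun_prop

lemma hasDerivAt_zeroMode (κ : ℝ) (m : ℕ) (hr : r ≠ 0) :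
    HasDerivAt (zeroMode κ m) ((m / r - κ * r) * zeroMode κ m r) r := by
  have hexp : HasDerivAt (fun x => Real.exp (-(κ * x ^ 2 / 2)))
      (Real.exp (-(κ * r ^ 2 / 2)) * (-(κ * r))) r := by
    refine (((hasDerivAt_pow 2 r).const_mul κ).div_const 2).neg.exp.congr_deriv ?_
    push_cast
    simp only [Pi.neg_apply]
    ring
  refine ((hasDerivAt_pow m r).mul hexp).congr_deriv ?_
  rw [zeroMode]
  rcases m with _ | m
  · simp; ring
  · push_cast
    field_simp
    ring

lemma norm_zeroMode_smul_sq_mul_self (κ : ℝ) (m : ℕ) (v : ℝ → ℂ) (r : ℝ) :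
    ‖zeroMode κ m r • v r‖ ^ 2 * r = ‖v r‖ ^ 2 * landauWeight κ m r := by
  rw [norm_smul, mul_pow, Real.norm_eq_abs, sq_abs, ← zeroMode_sq_mul_self]
  ring

lemma hasDerivAt_zeroMode_sq_mul (κ : ℝ) (m : ℕ) (hr : r ≠ 0) :
    HasDerivAt (fun x => zeroMode κ m x ^ 2 * (m - κ * x ^ 2))
      (2 * ((m / r - κ * r) ^ 2 - κ) * landauWeight κ m r) r := by
  refine (((hasDerivAt_zeroMode κ m hr).fun_pow 2).mul
    (((hasDerivAt_pow 2 r).const_mul κ).const_sub (m : ℝ))).congr_deriv ?_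
  rw [← zeroMode_sq_mul_self]
  push_cast
  field_simp
  ring

lemma norm_deriv_zeroMode_smul_sq (κ : ℝ) (m : ℕ) (hr : r ≠ 0) (hv : DifferentiableAt ℝ v r) :
    (‖deriv (fun x => zeroMode κ m x • v x) r‖ ^ 2
      + (m / r - κ * r) ^ 2 * ‖zeroMode κ m r • v r‖ ^ 2) * r =
    ‖deriv v r‖ ^ 2 * landauWeight κ m r
      + (2 * inner ℝ (v r) (deriv v r) * (zeroMode κ m r ^ 2 * (m - κ * r ^ 2))
        + ‖v r‖ ^ 2 * (2 * ((m / r - κ * r) ^ 2 - κ) * landauWeight κ m r))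
      + 2 * κ * (‖zeroMode κ m r • v r‖ ^ 2 * r) := by
  rw [((hasDerivAt_zeroMode κ m hr).fun_smul hv.hasDerivAt).deriv, norm_add_sq_real,
    real_inner_smul_left, real_inner_smul_right, real_inner_comm]
  simp only [norm_smul, mul_pow, Real.norm_eq_abs, sq_abs, ← zeroMode_sq_mul_self]
  field_simp
  ring

/-- The total derivative of `|v|² φ² (m - κ r²)`, with `φ = zeroMode κ m`, absorbs the potential and
all cross terms. -/
lemma integral_norm_deriv_zeroMode_smul_sq (hR : 0 ≤ R) (κ : ℝ) (m : ℕ) (hv : IsCptSmooth0R R v) :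
    ∫ r in Ioo 0 R, (‖deriv (fun x => zeroMode κ m x • v x) r‖ ^ 2
      + (m / r - κ * r) ^ 2 * ‖zeroMode κ m r • v r‖ ^ 2) * r =
    (∫ r in Ioo 0 R, ‖deriv v r‖ ^ 2 * landauWeight κ m r)
      + 2 * κ * ∫ r in Ioo 0 R, ‖zeroMode κ m r • v r‖ ^ 2 * r := by
  have hvd : Continuous (deriv v) := hv.1.continuous_deriv (by simp)
  have hvc := hv.1.continuous
  have hzc := (contDiff_zeroMode κ m).continuous
  let F' : ℝ → ℝ := fun r =>
    2 * inner ℝ (v r) (deriv v r) * (zeroMode κ m r ^ 2 * (m - κ * r ^ 2))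
      + ‖v r‖ ^ 2 * (2 * ((m / r - κ * r) ^ 2 - κ) * landauWeight κ m r)
  have hderiv : ∀ r ∈ Ioo 0 R, HasDerivAt
      (fun x => ‖v x‖ ^ 2 * (zeroMode κ m x ^ 2 * (m - κ * x ^ 2))) (F' r) r := fun r hr =>
    hasDerivAt_norm_sq_mul (hv.1.differentiable (by simp) r)
      (hasDerivAt_zeroMode_sq_mul κ m hr.1.ne')
  have hF'c : ContinuousOn F' (Ioo 0 R) := by
    have hdiv : ContinuousOn (fun r : ℝ => (m : ℝ) / r) (Ioo 0 R) :=
      continuousOn_const.div continuousOn_id fun r hr => hr.1.ne'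
    fun_prop
  have hF := (tsupport_norm_sq_mul_subset v
    fun x => zeroMode κ m x ^ 2 * (m - κ * x ^ 2)).trans hv.2.2
  have hv'int := integrableOn_norm_sq_mul hvd (tsupport_deriv_subset.trans hv.2.2)
    (continuous_landauWeight κ m).continuousOn
  have hF'int := integrableOn_deriv_of_tsupport_subset_Ioo hderiv hF'c hF
  have hu := hv.smul (contDiff_zeroMode κ m).contDiffOn
  have huint := (integrableOn_norm_sq_mul hu.1.continuous hu.2.2
    continuous_id'.continuousOn).const_mul (2 * κ)
  calc _ = ∫ r in Ioo 0 R, (‖deriv v r‖ ^ 2 * landauWeight κ m r + F' r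
        + 2 * κ * (‖zeroMode κ m r • v r‖ ^ 2 * r)) :=
        setIntegral_congr_fun measurableSet_Ioo fun r hr =>
          norm_deriv_zeroMode_smul_sq κ m hr.1.ne' (hv.1.differentiable (by simp) r)
    _ = _ := by
        rw [integral_add (Integrable.fun_add hv'int hF'int) huint, integral_add hv'int hF'int,
          integral_deriv_eq_zero_of_tsupport_subset_Ioo hR hderiv hF'c hF, add_zero,
          integral_const_mul]

lemma qm_zeroMode_smul {B h : ℝ} (hR : 0 ≤ R) (hh : h ≠ 0) (hκ : κ = B / (2 * h))
    (hv : IsCptSmooth0R R v) :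
    qm R B h m (fun r => zeroMode κ m r • v r) =
      h ^ 2 * ∫ r in Ioo 0 R, ‖deriv v r‖ ^ 2 * landauWeight κ m r := by
  have hpot (r : ℝ) : B * r / (2 * h) = κ * r := by rw [hκ]; ring
  have hhB : h * B = h ^ 2 * (2 * κ) := by rw [hκ]; field_simp
  simp only [qm, hpot, Int.cast_natCast, hhB, integral_norm_deriv_zeroMode_smul_sq hR κ m hv]
  ring

variable {B h Λ : ℝ}

lemma IsDirichletBound.mul_integral_le_qm (hR : 0 ≤ R) (hh : h ≠ 0) (hκ : κ = B / (2 * h))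
    (hΛ : IsDirichletBound R (landauWeight κ m) Λ) (hu : IsCptSmooth0R R u) :
    h ^ 2 * Λ * ∫ r in Ioo 0 R, ‖u r‖ ^ 2 * r ≤ qm R B h m u := by
  have hinv : ContDiffOn ℝ ∞ (fun r => (zeroMode κ m r)⁻¹) (Ioo 0 R) :=
    (contDiff_zeroMode κ m).contDiffOn.inv fun r hr => (zeroMode_pos κ m hr.1).ne'
  obtain ⟨v, hv, rfl⟩ : ∃ v, IsCptSmooth0R R v ∧ u = fun r => zeroMode κ m r • v r := by
    refine ⟨_, hu.smul hinv, funext fun r => ?_⟩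
    by_cases hr : r ∈ Ioo 0 R
    · rw [smul_inv_smul₀ (zeroMode_pos κ m hr.1).ne']
    · simp [hu.apply_eq_zero hr]
  rw [qm_zeroMode_smul hR hh hκ hv, mul_assoc]
  simp only [norm_zeroMode_smul_sq_mul_self]
  gcongr
  exact hΛ v hv

lemma isDirichletBound_zero (R κ : ℝ) (m : ℕ) : IsDirichletBound R (landauWeight κ m) 0 :=
  fun v _ => by
    rw [zero_mul]
    exact setIntegral_nonneg measurableSet_Ioo fun r hr =>
      mul_nonneg (sq_nonneg _) (landauWeight_pos κ m hr.1).le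

theorem mul_le_mum_iff (hR : 0 < R) (hh : h ≠ 0) (hκ : κ = B / (2 * h)) :
    h ^ 2 * Λ ≤ mum R B h m ↔ IsDirichletBound R (landauWeight κ m) Λ := by
  obtain ⟨u₀, hu₀, hu₀ne⟩ := exists_isCptSmooth0R_ne_zero hR
  have hquot {Λ : ℝ} (hΛ : IsDirichletBound R (landauWeight κ m) Λ) {u : ℝ → ℂ}
      (hu : IsCptSmooth0R R u) (hne : u ≠ 0) :
      h ^ 2 * Λ ≤ qm R B h m u / ∫ r in Ioo 0 R, ‖u r‖ ^ 2 * r :=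
    (le_div_iff₀ (hu.integral_norm_sq_mul_self_pos hne)).2 (hΛ.mul_integral_le_qm hR.le hh hκ hu)
  have hbdd : BddBelow { c | ∃ u : ℝ → ℂ, IsCptSmooth0R R u ∧ u ≠ 0 ∧
      c = qm R B h m u / ∫ r in Ioo (0 : ℝ) R, ‖u r‖ ^ 2 * r } := by
    refine ⟨h ^ 2 * 0, ?_⟩
    rintro c ⟨u, hu, hne, rfl⟩
    exact hquot (isDirichletBound_zero R κ m) hu hne
  rw [mum, le_csInf_iff hbdd ⟨_, u₀, hu₀, hu₀ne, rfl⟩]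
  refine ⟨fun hle v hv => ?_, fun hΛ c ⟨u, hu, hne, hc⟩ => hc ▸ hquot hΛ hu hne⟩
  rcases eq_or_ne v 0 with rfl | hne
  · simp
  have hu := hv.smul (contDiff_zeroMode κ m).contDiffOn
  have hune : (fun r => zeroMode κ m r • v r) ≠ 0 := by
    obtain ⟨r, hr⟩ := Function.ne_iff.1 hne
    have hr0 : r ∈ Ioo 0 R := by_contra fun h => hr (hv.apply_eq_zero h)
    exact Function.ne_iff.2 ⟨r, smul_ne_zero (zeroMode_pos κ m hr0.1).ne' hr⟩
  have hq := hle _ ⟨_, hu, hune, rfl⟩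
  rw [le_div_iff₀ (hu.integral_norm_sq_mul_self_pos hune), qm_zeroMode_smul hR.le hh hκ hv,
    mul_assoc] at hq
  simp only [norm_zeroMode_smul_sq_mul_self] at hq
  exact le_of_mul_le_mul_left hq (by positivity)

end GroundState

section LowerBound

variable {R κ r : ℝ}

/-- The primitive of `landauWeight κ m` vanishing at `0`. -/
def weightPrimitive (κ : ℝ) (m : ℕ) (r : ℝ) : ℝ :=
  m ! / (2 * κ ^ (m + 1)) * (Real.exp (-(κ * r ^ 2)) * expTail (m + 1) (κ * r ^ 2))

/-- The leading term `4 κ S ^ (m + 1) / m! · e^{-S}`, with `S = κ R²`, of the optimal constant in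
`IsDirichletBound R (landauWeight κ m)`. -/
def dirichletLeadingTerm (R κ : ℝ) (m : ℕ) : ℝ :=
  4 * κ * (κ * R ^ 2) ^ (m + 1) / m ! * Real.exp (-(κ * R ^ 2))

lemma weightPrimitive_zero (κ : ℝ) (m : ℕ) : weightPrimitive κ m 0 = 0 := by
  simp [weightPrimitive, expTail_succ_zero]

lemma hasDerivAt_const_mul_sq (κ r : ℝ) : HasDerivAt (fun x => κ * x ^ 2) (2 * κ * r) r :=
  ((hasDerivAt_pow 2 r).const_mul κ).congr_deriv (by push_cast; ring)

lemma hasDerivAt_weightPrimitive (hκ : κ ≠ 0) (m : ℕ) (r : ℝ) :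
    HasDerivAt (weightPrimitive κ m) (landauWeight κ m r) r := by
  have hsq := hasDerivAt_const_mul_sq κ r
  refine ((hsq.fun_neg.exp.mul ((hasDerivAt_expTail_succ m _).comp r hsq)).const_mul
    (m ! / (2 * κ ^ (m + 1)))).congr_deriv ?_
  rw [expTail_eq_add_expTail_succ m, landauWeight, Function.comp_apply]
  field_simp
  ring

lemma hasDerivAt_expTailIntegral_mul_sq (m : ℕ) (hκ : 0 < κ) (hr : r ∈ Ioo 0 R) :
    HasDerivAt (fun x => expTailIntegral (m + 1) (κ * R ^ 2) (κ * x ^ 2))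
      (-(4 * κ / m ! * weightPrimitive κ m r / landauWeight κ m r)) r := by
  have hr0 : 0 < r := hr.1
  have hle : κ * r ^ 2 ≤ κ * R ^ 2 := by gcongr; exact hr.2.le
  refine ((hasDerivAt_expTailIntegral (by positivity) hle).comp r
    (hasDerivAt_const_mul_sq κ r)).congr_deriv ?_
  rw [weightPrimitive, landauWeight]
  field_simp
  ring

theorem isDirichletBound_landauWeight (hR : 0 ≤ R) (hκ : 0 < κ) (m : ℕ) :
    IsDirichletBound R (landauWeight κ m)
      (dirichletLeadingTerm R κ m / (1 + (m + 1) * (m + 3) / (κ * R ^ 2))) := by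
  intro v hv
  refine mul_integral_norm_sq_le_of_torsion hR (hv.1.of_le (by simp)) hv.2.2
    (continuous_landauWeight κ m).continuousOn (fun r hr => landauWeight_pos κ m hr.1)
    (fun r _ => hasDerivAt_weightPrimitive hκ.ne' m r)
    (fun r hr => hasDerivAt_expTailIntegral_mul_sq m hκ hr) (fun r hr => ?_) fun r hr => ?_
  all_goals
    have hr0 : 0 < r := hr.1
    have hlt : κ * r ^ 2 < κ * R ^ 2 := by gcongr; exact hr.2
  · exact expTailIntegral_pos (by positivity) hlt
  · have hR0 : 0 < R := hr0.trans hr.2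
    have hf := expTailIntegral_le (m + 1) (by positivity) hlt.le
    calc dirichletLeadingTerm R κ m / (1 + (m + 1) * (m + 3) / (κ * R ^ 2))
          * expTailIntegral (m + 1) (κ * R ^ 2) (κ * r ^ 2)
        ≤ dirichletLeadingTerm R κ m / (1 + (m + 1) * (m + 3) / (κ * R ^ 2))
          * (Real.exp (κ * R ^ 2) / (κ * R ^ 2) ^ (m + 1)
            * (1 + (m + 1 : ℕ) * ((m + 1 : ℕ) + 2) / (κ * R ^ 2))) := by
          gcongr
          unfold dirichletLeadingTerm
          positivity
      _ = 4 * κ / m ! := by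
          rw [dirichletLeadingTerm, Real.exp_neg]
          push_cast
          rw [show (m : ℝ) + 1 + 2 = m + 3 by ring]
          field_simp

end LowerBound

section LogCutoff

/-- A smooth cut-off in the variable `log ξ`, equal to `0` for `ξ ≤ e^{-2N}` and to `1` for
`ξ ≥ e^{-N}`. The long transition makes its derivative `O(1 / (N ξ))`. -/
def logCutoff (N ξ : ℝ) : ℝ :=
  if ξ ≤ 0 then 0 else Real.smoothTransition (2 + Real.log ξ / N)

variable {N ξ : ℝ}

lemma logCutoff_eventuallyEq (N : ℝ) (hξ : 0 < ξ) :
    logCutoff N =ᶠ[𝓝 ξ] fun x => Real.smoothTransition (2 + Real.log x / N) := by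
  filter_upwards [lt_mem_nhds hξ] with x hx
  exact if_neg hx.not_ge

lemma logCutoff_eq_zero (hN : 0 < N) (hξ : ξ ≤ Real.exp (-(2 * N))) : logCutoff N ξ = 0 := by
  unfold logCutoff
  split_ifs with h
  · rfl
  · have hlog := (Real.log_le_iff_le_exp (not_le.1 h)).2 hξ
    have : Real.log ξ / N ≤ -2 := (div_le_iff₀ hN).2 (by linarith)
    exact Real.smoothTransition.zero_of_nonpos (by linarith)

lemma logCutoff_eq_one (hN : 0 < N) (hξ : Real.exp (-N) ≤ ξ) : logCutoff N ξ = 1 := by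
  have hξ0 : 0 < ξ := (Real.exp_pos _).trans_le hξ
  have hlog := (Real.le_log_iff_exp_le hξ0).2 hξ
  have : -1 ≤ Real.log ξ / N := (le_div_iff₀ hN).2 (by linarith)
  rw [logCutoff, if_neg hξ0.not_ge]
  exact Real.smoothTransition.one_of_one_le (by linarith)

lemma logCutoff_nonneg (N ξ : ℝ) : 0 ≤ logCutoff N ξ := by
  unfold logCutoff
  split_ifs
  exacts [le_rfl, Real.smoothTransition.nonneg _]

lemma logCutoff_le_one (N ξ : ℝ) : logCutoff N ξ ≤ 1 := by
  unfold logCutoff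
  split_ifs
  exacts [zero_le_one, Real.smoothTransition.le_one _]

lemma monotone_logCutoff (hN : 0 < N) : Monotone (logCutoff N) := by
  intro ξ η hle
  by_cases hξ : ξ ≤ 0
  · simpa only [logCutoff, if_pos hξ] using logCutoff_nonneg N η
  · have hξ0 : 0 < ξ := not_le.1 hξ
    rw [logCutoff, logCutoff, if_neg hξ, if_neg (hξ0.trans_le hle).not_ge]
    apply Real.smoothTransition.monotone
    gcongr

lemma contDiff_logCutoff (hN : 0 < N) : ContDiff ℝ ∞ (logCutoff N) := by
  refine contDiff_iff_contDiffAt.2 fun ξ => ?_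
  rcases lt_or_ge 0 ξ with hξ | hξ
  · exact (Real.smoothTransition.contDiffAt.comp ξ (contDiffAt_const.add
      ((Real.contDiffAt_log.2 hξ.ne').div_const N))).congr_of_eventuallyEq
        (logCutoff_eventuallyEq N hξ)
  · refine (contDiffAt_const (c := (0 : ℝ))).congr_of_eventuallyEq ?_
    filter_upwards [gt_mem_nhds (hξ.trans_lt (Real.exp_pos (-(2 * N))))] with x hx
    exact logCutoff_eq_zero hN hx.le

lemma exists_abs_deriv_smoothTransition_le :
    ∃ C, ∀ x, |deriv Real.smoothTransition x| ≤ C := by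
  have hsupp : HasCompactSupport (deriv Real.smoothTransition) := by
    refine HasCompactSupport.of_support_subset_isCompact (isCompact_Icc (a := (0 : ℝ)) (b := 1))
      fun x hx => ?_
    by_contra hmem
    rcases not_and_or.1 hmem with h | h <;> refine hx ?_
    · refine ((hasDerivAt_const x 0).congr_of_eventuallyEq ?_).deriv
      filter_upwards [gt_mem_nhds (not_le.1 h)] with y hy
      exact Real.smoothTransition.zero_of_nonpos hy.le
    · refine ((hasDerivAt_const x 1).congr_of_eventuallyEq ?_).deriv
      filter_upwards [lt_mem_nhds (not_le.1 h)] with y hy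
      exact Real.smoothTransition.one_of_one_le hy.le
  exact hsupp.exists_bound_of_continuous
    ((Real.smoothTransition.contDiff (n := 1)).continuous_deriv le_rfl)

lemma exists_abs_deriv_logCutoff_le :
    ∃ C, 0 ≤ C ∧ ∀ N ξ, 0 < N → 0 < ξ → |deriv (logCutoff N) ξ| ≤ C / (N * ξ) := by
  obtain ⟨C, hC⟩ := exists_abs_deriv_smoothTransition_le
  refine ⟨C, (abs_nonneg _).trans (hC 0), fun N ξ hN hξ => ?_⟩
  have hst := ((Real.smoothTransition.contDiff (n := 1)).differentiable one_ne_zero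
    (2 + Real.log ξ / N)).hasDerivAt
  have hderiv := (hst.comp ξ (((Real.hasDerivAt_log hξ.ne').div_const N).const_add 2))
    |>.congr_of_eventuallyEq (logCutoff_eventuallyEq N hξ)
  rw [hderiv.deriv, abs_mul, abs_of_pos (by positivity : 0 < ξ⁻¹ / N), inv_div_left,
    ← div_eq_mul_inv, mul_comm N ξ]
  gcongr
  exact hC _

end LogCutoff

section BoundaryCutoff

/-- The cut-off `logCutoff N (r (R - r))` at both ends of `(0, R)`. -/
def boundaryCutoff (R N r : ℝ) : ℝ := logCutoff N (r * (R - r))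

variable {R N r : ℝ}

lemma contDiff_boundaryCutoff (R : ℝ) (hN : 0 < N) : ContDiff ℝ ∞ (boundaryCutoff R N) :=
  (contDiff_logCutoff hN).comp (contDiff_id.mul (contDiff_const.sub contDiff_id))

lemma boundaryCutoff_eq_zero (hN : 0 < N) (hr : r * (R - r) ≤ 0) : boundaryCutoff R N r = 0 :=
  logCutoff_eq_zero hN (hr.trans (Real.exp_pos _).le)

lemma tsupport_boundaryCutoff_subset (hR : 0 < R) (hN : 0 < N) :
    tsupport (boundaryCutoff R N) ⊆ Ioo 0 R := by
  have hclosed : IsClosed {r : ℝ | Real.exp (-(2 * N)) ≤ r * (R - r)} :=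
    isClosed_le continuous_const (by fun_prop)
  refine (closure_minimal (fun r hr => ?_) hclosed).trans fun r hr => ?_
  · by_contra h
    exact hr (logCutoff_eq_zero hN (not_le.1 h).le)
  · have hpos : 0 < r * (R - r) := (Real.exp_pos _).trans_le hr
    rcases mul_pos_iff.1 hpos with ⟨h0, h1⟩ | ⟨h0, h1⟩
    · exact ⟨h0, sub_pos.1 h1⟩
    · linarith

lemma tendsto_boundaryCutoff (hr : r ∈ Ioo 0 R) :
    Tendsto (fun N => boundaryCutoff R N r) atTop (𝓝 1) := by
  have hpos : 0 < r * (R - r) := mul_pos hr.1 (sub_pos.2 hr.2)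
  refine tendsto_const_nhds.congr' ?_
  filter_upwards [eventually_gt_atTop 0, eventually_ge_atTop (-Real.log (r * (R - r)))]
    with N hN hlog
  exact (logCutoff_eq_one hN ((Real.le_log_iff_exp_le hpos).1 (by linarith))).symm

lemma hasDerivAt_boundaryCutoff (hN : 0 < N) (r : ℝ) : HasDerivAt (boundaryCutoff R N)
    (deriv (logCutoff N) (r * (R - r)) * (R - 2 * r)) r := by
  have hpoly : HasDerivAt (fun x => x * (R - x)) (R - 2 * r) r :=
    ((hasDerivAt_id r).mul ((hasDerivAt_id r).const_sub R)).congr_deriv (by simp only [id]; ring)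
  exact ((contDiff_logCutoff hN).differentiable (by simp) _).hasDerivAt.comp r hpoly

lemma exists_abs_deriv_boundaryCutoff_le : ∃ C, 0 ≤ C ∧ ∀ R N r, 0 < N → r ∈ Ioo 0 R →
    |deriv (boundaryCutoff R N) r| ≤ C * R / (N * (r * (R - r))) := by
  obtain ⟨C, hC0, hC⟩ := exists_abs_deriv_logCutoff_le
  refine ⟨C, hC0, fun R N r hN hr => ?_⟩
  have hlin : |R - 2 * r| ≤ R := abs_le.2 ⟨by linarith [hr.2], by linarith [hr.1]⟩
  have hpos : 0 < r * (R - r) := mul_pos hr.1 (sub_pos.2 hr.2)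
  rw [(hasDerivAt_boundaryCutoff hN r).deriv, abs_mul, mul_div_right_comm]
  gcongr
  exact hC N _ hN hpos

/-- The cut-off increases from `0` on `(0, R / 2)` and decreases back to `0` on `(R / 2, R)`. -/
lemma integral_abs_deriv_boundaryCutoff_le (hR : 0 ≤ R) (hN : 0 < N) :
    ∫ r in Ioo 0 R, |deriv (boundaryCutoff R N) r| ≤ 2 := by
  set χ := boundaryCutoff R N
  have hd : Differentiable ℝ χ := (contDiff_boundaryCutoff R hN).differentiable (by simp)
  have hc : Continuous (deriv χ) := (contDiff_boundaryCutoff R hN).continuous_deriv (by simp)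
  have hmono (x : ℝ) : 0 ≤ deriv (logCutoff N) x := (monotone_logCutoff hN).deriv_nonneg
  have hleft : ∫ r in (0 : ℝ)..R / 2, |deriv χ r| = χ (R / 2) - χ 0 := by
    rw [← intervalIntegral.integral_deriv_eq_sub (fun r _ => hd r) (hc.intervalIntegrable _ _)]
    refine intervalIntegral.integral_congr fun r hr => abs_of_nonneg ?_
    rw [uIcc_of_le (by linarith)] at hr
    rw [(hasDerivAt_boundaryCutoff hN r).deriv]
    exact mul_nonneg (hmono _) (by linarith [hr.2])
  have hright : ∫ r in R / 2..R, |deriv χ r| = -(χ R - χ (R / 2)) := by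
    rw [← intervalIntegral.integral_deriv_eq_sub (fun r _ => hd r) (hc.intervalIntegrable _ _),
      ← intervalIntegral.integral_neg]
    refine intervalIntegral.integral_congr fun r hr => abs_of_nonpos ?_
    rw [uIcc_of_le (by linarith)] at hr
    rw [(hasDerivAt_boundaryCutoff hN r).deriv]
    exact mul_nonpos_of_nonneg_of_nonpos (hmono _) (by linarith [hr.1])
  have h0 : χ 0 = 0 := boundaryCutoff_eq_zero hN (by simp)
  have h1 : χ R = 0 := boundaryCutoff_eq_zero hN (by simp)
  have hhalf : χ (R / 2) ≤ 1 := logCutoff_le_one N _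
  rw [← integral_Ioc_eq_integral_Ioo, ← intervalIntegral.integral_of_le hR,
    ← intervalIntegral.integral_add_adjacent_intervals (b := R / 2)
      (hc.abs.intervalIntegrable _ _) (hc.abs.intervalIntegrable _ _), hleft, hright]
  linarith

end BoundaryCutoff

section Density

variable {R A K L M Λ N : ℝ} {ρ : ℝ → ℝ} {w : ℝ → ℂ}

lemma integrableOn_Ioo_of_continuous {f : ℝ → ℝ} {a b : ℝ} (hf : Continuous f) :
    IntegrableOn f (Ioo a b) :=
  hf.integrableOn_Icc.mono_set Ioo_subset_Icc_self

lemma isCptSmooth0R_boundaryCutoff_smul (hR : 0 < R) (hN : 0 < N) (hw : ContDiff ℝ ∞ w) :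
    IsCptSmooth0R R (fun r => boundaryCutoff R N r • w r) :=
  .of_tsupport_subset ((contDiff_boundaryCutoff R hN).smul hw)
    ((tsupport_smul_subset_left _ w).trans (tsupport_boundaryCutoff_subset hR hN))

lemma tendsto_integral_boundaryCutoff_smul (R : ℝ) (hρ : Continuous ρ) (hw : Continuous w) :
    Tendsto (fun N => ∫ r in Ioo 0 R, ‖boundaryCutoff R N r • w r‖ ^ 2 * ρ r) atTop
      (𝓝 (∫ r in Ioo 0 R, ‖w r‖ ^ 2 * ρ r)) := by
  refine tendsto_integral_filter_of_dominated_convergence (fun r => |‖w r‖ ^ 2 * ρ r|) ?_ ?_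
    (integrableOn_Ioo_of_continuous (by fun_prop)) ?_
  · filter_upwards [eventually_gt_atTop 0] with N hN
    have := (contDiff_boundaryCutoff R hN).continuous
    exact Continuous.aestronglyMeasurable (by fun_prop)
  · refine Eventually.of_forall fun N => Eventually.of_forall fun r => ?_
    have h0 : 0 ≤ boundaryCutoff R N r := logCutoff_nonneg N _
    have hle : boundaryCutoff R N r ≤ 1 := logCutoff_le_one N _
    rw [norm_smul, Real.norm_of_nonneg h0, Real.norm_eq_abs, abs_mul, abs_mul]
    gcongr
    exact mul_le_of_le_one_left (norm_nonneg _) hle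
  · filter_upwards [ae_restrict_mem measurableSet_Ioo] with r hr
    simpa using (((tendsto_boundaryCutoff hr).smul_const (w r)).norm.pow 2).mul_const (ρ r)

lemma norm_deriv_smul_sq_mul_le {χ : ℝ → ℝ} {r p b : ℝ} (hχ : DifferentiableAt ℝ χ r)
    (hw : DifferentiableAt ℝ w r) (h0 : 0 ≤ χ r) (h1 : χ r ≤ 1) (hp : 0 ≤ p)
    (hL : ‖deriv w r‖ ≤ L) (hb : ‖w r‖ ≤ b) (hK : |deriv χ r| * ‖w r‖ * p ≤ K) :
    ‖deriv (fun x => χ x • w x) r‖ ^ 2 * p ≤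
      ‖deriv w r‖ ^ 2 * p + K * (2 * L + b * |deriv χ r|) := by
  have hnorm : ‖deriv (fun x => χ x • w x) r‖ ≤ ‖deriv w r‖ + |deriv χ r| * ‖w r‖ := by
    rw [(hχ.hasDerivAt.fun_smul hw.hasDerivAt).deriv]
    refine (norm_add_le _ _).trans ?_
    rw [norm_smul, norm_smul, Real.norm_of_nonneg h0, Real.norm_eq_abs]
    gcongr
    exact mul_le_of_le_one_left (norm_nonneg _) h1
  have hg : 2 * ‖deriv w r‖ + |deriv χ r| * ‖w r‖ ≤ 2 * L + b * |deriv χ r| := by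
    rw [mul_comm b]
    gcongr
  calc ‖deriv (fun x => χ x • w x) r‖ ^ 2 * p
      ≤ (‖deriv w r‖ + |deriv χ r| * ‖w r‖) ^ 2 * p := by gcongr
    _ = ‖deriv w r‖ ^ 2 * p
        + |deriv χ r| * ‖w r‖ * p * (2 * ‖deriv w r‖ + |deriv χ r| * ‖w r‖) := by ring
    _ ≤ ‖deriv w r‖ ^ 2 * p + K * (2 * L + b * |deriv χ r|) := by
        gcongr
        exact (by positivity : (0 : ℝ) ≤ _).trans hK

lemma integral_const_add_mul_abs_deriv_boundaryCutoff_le (hR : 0 ≤ R) (hN : 0 < N) (a : ℝ) {b : ℝ}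
    (hb : 0 ≤ b) :
    ∫ r in Ioo 0 R, (a + b * |deriv (boundaryCutoff R N) r|) ≤ a * R + b * 2 := by
  have hχ' : Continuous (deriv (boundaryCutoff R N)) :=
    (contDiff_boundaryCutoff R hN).continuous_deriv (by simp)
  rw [integral_add (integrableOn_Ioo_of_continuous (by fun_prop))
    (integrableOn_Ioo_of_continuous (by fun_prop)), integral_const_mul, setIntegral_const,
    Real.volume_real_Ioo_of_le hR, smul_eq_mul, sub_zero, mul_comm R]
  gcongr
  exact integral_abs_deriv_boundaryCutoff_le hR hN

/-- The factor `R - r` of `w`, the factor `r` of `ρ` and `|χ′| ≲ 1 / (N r (R - r))` combine to a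
uniform `O(1 / N)`; the one power of `χ′` left over is controlled by its total variation. -/
lemma exists_integral_deriv_boundaryCutoff_smul_le (hR : 0 < R) (hρ : Continuous ρ)
    (hρ0 : ∀ r ∈ Ioo 0 R, 0 ≤ ρ r) (hρM : ∀ r ∈ Ioo 0 R, ρ r ≤ M * r) (hw : ContDiff ℝ ∞ w)
    (hwA : ∀ r ∈ Ioo 0 R, ‖w r‖ ≤ A * (R - r)) :
    ∃ K, ∀ N, 0 < N → ∫ r in Ioo 0 R, ‖deriv (fun x => boundaryCutoff R N x • w x) r‖ ^ 2 * ρ r ≤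
      (∫ r in Ioo 0 R, ‖deriv w r‖ ^ 2 * ρ r) + K / N := by
  have hw' : Continuous (deriv w) := hw.continuous_deriv (by simp)
  obtain ⟨L, hL⟩ := isCompact_Icc.exists_bound_of_continuousOn (s := Icc 0 R) hw'.continuousOn
  obtain ⟨C, hC0, hC⟩ := exists_abs_deriv_boundaryCutoff_le
  have hmid : R / 2 ∈ Ioo 0 R := ⟨by linarith, by linarith⟩
  have hA0 : 0 ≤ A :=
    nonneg_of_mul_nonneg_left ((norm_nonneg _).trans (hwA _ hmid)) (sub_pos.2 hmid.2)
  have hM0 : 0 ≤ M := nonneg_of_mul_nonneg_left ((hρ0 _ hmid).trans (hρM _ hmid)) hmid.1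
  refine ⟨C * R * A * M * (2 * L * R + A * R * 2), fun N hN => ?_⟩
  have hχ := contDiff_boundaryCutoff R hN
  have hχ' : Continuous (deriv (boundaryCutoff R N)) := hχ.continuous_deriv (by simp)
  have hvd : Continuous (deriv fun x => boundaryCutoff R N x • w x) :=
    (hχ.smul hw).continuous_deriv (by simp)
  have hpointwise : ∀ r ∈ Ioo 0 R, ‖deriv (fun x => boundaryCutoff R N x • w x) r‖ ^ 2 * ρ r ≤
      ‖deriv w r‖ ^ 2 * ρ r
        + C * R * A * M / N * (2 * L + A * R * |deriv (boundaryCutoff R N) r|) := by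
    intro r hr
    have hr0 : 0 < r := hr.1
    have hRr : 0 < R - r := sub_pos.2 hr.2
    refine norm_deriv_smul_sq_mul_le (hχ.differentiable (by simp) r) (hw.differentiable (by simp) r)
      (logCutoff_nonneg _ _) (logCutoff_le_one _ _) (hρ0 r hr) (hL r (Ioo_subset_Icc_self hr))
      ((hwA r hr).trans (by gcongr; linarith)) ?_
    calc |deriv (boundaryCutoff R N) r| * ‖w r‖ * ρ r
        ≤ C * R / (N * (r * (R - r))) * (A * (R - r)) * (M * r) := by
          gcongr
          exacts [hρ0 r hr, hC R N r hN hr, hwA r hr, hρM r hr]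
      _ = C * R * A * M / N := by field_simp
  refine (setIntegral_mono_on (integrableOn_Ioo_of_continuous (by fun_prop))
    (integrableOn_Ioo_of_continuous (by fun_prop)) measurableSet_Ioo hpointwise).trans ?_
  rw [integral_add (integrableOn_Ioo_of_continuous (by fun_prop))
    (integrableOn_Ioo_of_continuous (by fun_prop)), integral_const_mul,
    mul_div_right_comm _ (2 * L * R + A * R * 2) N]
  gcongr
  exact integral_const_add_mul_abs_deriv_boundaryCutoff_le hR.le hN _ (by positivity)

lemma IsDirichletBound.mul_integral_le_of_norm_le (hΛ : IsDirichletBound R ρ Λ) (hR : 0 < R)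
    (hρ : Continuous ρ) (hρ0 : ∀ r ∈ Ioo 0 R, 0 ≤ ρ r) (hρM : ∀ r ∈ Ioo 0 R, ρ r ≤ M * r)
    (hw : ContDiff ℝ ∞ w) (hwA : ∀ r ∈ Ioo 0 R, ‖w r‖ ≤ A * (R - r)) :
    Λ * ∫ r in Ioo 0 R, ‖w r‖ ^ 2 * ρ r ≤ ∫ r in Ioo 0 R, ‖deriv w r‖ ^ 2 * ρ r := by
  obtain ⟨K, hK⟩ := exists_integral_deriv_boundaryCutoff_smul_le hR hρ hρ0 hρM hw hwA
  have hleft := (tendsto_integral_boundaryCutoff_smul R hρ hw.continuous).const_mul Λ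
  have hright := (tendsto_const_nhds (x := K)).div_atTop tendsto_id
    |>.const_add (∫ r in Ioo 0 R, ‖deriv w r‖ ^ 2 * ρ r)
  rw [add_zero] at hright
  refine le_of_tendsto_of_tendsto hleft hright ?_
  filter_upwards [eventually_gt_atTop 0] with N hN
  exact (hΛ _ (isCptSmooth0R_boundaryCutoff_smul hR hN hw)).trans (hK N hN)

end Density

section UpperBound

variable {R κ r Λ : ℝ}

/-- The profile `1 - e^{-κ (R² - r²)}`, which is close to the constant `1` away from a boundary
layer of width `1 / (κ R)` at `r = R`. It is the trial function for the upper bound. -/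
def boundaryLayer (R κ r : ℝ) : ℝ := 1 - Real.exp (-(κ * (R ^ 2 - r ^ 2)))

lemma contDiff_ofReal_boundaryLayer (R κ : ℝ) :
    ContDiff ℝ ∞ (fun r => (boundaryLayer R κ r : ℂ)) := by
  refine Complex.ofRealCLM.contDiff.comp (?_ : ContDiff ℝ ∞ (boundaryLayer R κ))
  unfold boundaryLayer
  fun_prop

lemma norm_ofReal_boundaryLayer_le (hκ : 0 ≤ κ) (hr : r ∈ Ioo 0 R) :
    ‖(boundaryLayer R κ r : ℂ)‖ ≤ 2 * κ * R * (R - r) := by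
  have hRr : 0 ≤ R - r := sub_nonneg.2 hr.2.le
  have hx : 0 ≤ κ * (R ^ 2 - r ^ 2) := mul_nonneg hκ (by nlinarith [hr.1])
  have h0 : 0 ≤ boundaryLayer R κ r := sub_nonneg.2 (Real.exp_le_one_iff.2 (by linarith))
  rw [Complex.norm_real, Real.norm_of_nonneg h0]
  calc boundaryLayer R κ r ≤ κ * (R ^ 2 - r ^ 2) := by
        have := Real.one_sub_le_exp_neg (κ * (R ^ 2 - r ^ 2))
        rw [boundaryLayer]
        linarith
    _ = κ * (R + r) * (R - r) := by ring
    _ ≤ κ * (R + R) * (R - r) := by gcongr; exact hr.2.le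
    _ = 2 * κ * R * (R - r) := by ring

lemma deriv_ofReal_boundaryLayer (R κ r : ℝ) : deriv (fun x => (boundaryLayer R κ x : ℂ)) r =
    ((-(2 * κ * r * Real.exp (-(κ * (R ^ 2 - r ^ 2)))) : ℝ) : ℂ) := by
  have hpoly : HasDerivAt (fun x => -(κ * (R ^ 2 - x ^ 2))) (2 * κ * r) r :=
    ((((hasDerivAt_pow 2 r).const_sub (R ^ 2)).const_mul κ).fun_neg).congr_deriv
      (by push_cast; ring)
  exact ((hpoly.exp.const_sub 1).congr_deriv (by ring)).ofReal_comp.deriv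

lemma integral_two_mul_mul_exp_mul_sq (hR : 0 ≤ R) (κ : ℝ) :
    ∫ r in Ioo 0 R, 2 * κ * r * Real.exp (κ * r ^ 2) = Real.exp (κ * R ^ 2) - 1 := by
  rw [← integral_Ioc_eq_integral_Ioo, ← intervalIntegral.integral_of_le hR,
    intervalIntegral.integral_eq_sub_of_hasDerivAt (f := fun r => Real.exp (κ * r ^ 2))
      (fun r _ => (hasDerivAt_const_mul_sq κ r).exp.congr_deriv (mul_comm _ _))
      (Continuous.intervalIntegrable (by fun_prop) _ _)]
  simp

lemma integral_deriv_boundaryLayer_le (hR : 0 ≤ R) (hκ : 0 ≤ κ) (m : ℕ) :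
    ∫ r in Ioo 0 R, ‖deriv (fun x => (boundaryLayer R κ x : ℂ)) r‖ ^ 2 * landauWeight κ m r ≤
      2 * κ * R ^ (2 * m + 2) * Real.exp (-(κ * R ^ 2)) := by
  have hcont : Continuous (deriv fun x => (boundaryLayer R κ x : ℂ)) :=
    (contDiff_ofReal_boundaryLayer R κ).continuous_deriv (by simp)
  have hpointwise : ∀ r ∈ Ioo 0 R,
      ‖deriv (fun x => (boundaryLayer R κ x : ℂ)) r‖ ^ 2 * landauWeight κ m r ≤
        2 * κ * R ^ (2 * m + 2) * Real.exp (-(κ * R ^ 2)) ^ 2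
          * (2 * κ * r * Real.exp (κ * r ^ 2)) := by
    intro r hr
    have hr0 : 0 < r := hr.1
    have hexp : Real.exp (-(κ * (R ^ 2 - r ^ 2))) =
        Real.exp (-(κ * R ^ 2)) * Real.exp (κ * r ^ 2) := by rw [← Real.exp_add]; ring_nf
    calc ‖deriv (fun x => (boundaryLayer R κ x : ℂ)) r‖ ^ 2 * landauWeight κ m r
        = 2 * κ * r ^ (2 * m + 2) * Real.exp (-(κ * R ^ 2)) ^ 2
            * (2 * κ * r * Real.exp (κ * r ^ 2)) := by
          rw [deriv_ofReal_boundaryLayer, Complex.norm_real, Real.norm_eq_abs, sq_abs, landauWeight,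
            hexp, Real.exp_neg (κ * r ^ 2)]
          field_simp
          ring
      _ ≤ _ := by gcongr; exact hr.2.le
  calc _ ≤ ∫ r in Ioo 0 R, 2 * κ * R ^ (2 * m + 2) * Real.exp (-(κ * R ^ 2)) ^ 2
          * (2 * κ * r * Real.exp (κ * r ^ 2)) :=
        setIntegral_mono_on (integrableOn_Ioo_of_continuous (by fun_prop))
          (integrableOn_Ioo_of_continuous (by fun_prop)) measurableSet_Ioo hpointwise
    _ = 2 * κ * R ^ (2 * m + 2) * Real.exp (-(κ * R ^ 2)) ^ 2 * (Real.exp (κ * R ^ 2) - 1) := by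
        rw [integral_const_mul, integral_two_mul_mul_exp_mul_sq hR]
    _ ≤ 2 * κ * R ^ (2 * m + 2) * Real.exp (-(κ * R ^ 2)) ^ 2 * Real.exp (κ * R ^ 2) := by
        gcongr
        linarith
    _ = 2 * κ * R ^ (2 * m + 2) * Real.exp (-(κ * R ^ 2)) := by
        rw [Real.exp_neg]
        field_simp

lemma integral_landauWeight (hR : 0 ≤ R) (hκ : κ ≠ 0) (m : ℕ) :
    ∫ r in Ioo 0 R, landauWeight κ m r = weightPrimitive κ m R := by
  rw [← integral_Ioc_eq_integral_Ioo, ← intervalIntegral.integral_of_le hR,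
    intervalIntegral.integral_eq_sub_of_hasDerivAt (fun r _ => hasDerivAt_weightPrimitive hκ m r)
      ((continuous_landauWeight κ m).intervalIntegrable _ _), weightPrimitive_zero, sub_zero]

lemma landauWeight_sub_le_norm_boundaryLayer_sq_mul (R κ : ℝ) (m : ℕ) (hr : 0 ≤ r) :
    landauWeight κ m r - 2 * Real.exp (-(κ * R ^ 2)) * r ^ (2 * m + 1) ≤
      ‖(boundaryLayer R κ r : ℂ)‖ ^ 2 * landauWeight κ m r := by
  have hexp : Real.exp (-(κ * R ^ 2)) =
      Real.exp (-(κ * (R ^ 2 - r ^ 2))) * Real.exp (-(κ * r ^ 2)) := by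
    rw [← Real.exp_add]; ring_nf
  have hρ : 0 ≤ landauWeight κ m r := by unfold landauWeight; positivity
  calc landauWeight κ m r - 2 * Real.exp (-(κ * R ^ 2)) * r ^ (2 * m + 1)
      = (1 - 2 * Real.exp (-(κ * (R ^ 2 - r ^ 2)))) * landauWeight κ m r := by
        rw [hexp, landauWeight]; ring
    _ ≤ ‖(boundaryLayer R κ r : ℂ)‖ ^ 2 * landauWeight κ m r := by
        rw [Complex.norm_real, Real.norm_eq_abs, sq_abs, boundaryLayer]
        gcongr
        linarith [sq_nonneg (Real.exp (-(κ * (R ^ 2 - r ^ 2))))]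

lemma weightPrimitive_sub_le_integral_boundaryLayer (hR : 0 ≤ R) (hκ : κ ≠ 0) (m : ℕ) :
    weightPrimitive κ m R - Real.exp (-(κ * R ^ 2)) * R ^ (2 * m + 2) / (m + 1) ≤
      ∫ r in Ioo 0 R, ‖(boundaryLayer R κ r : ℂ)‖ ^ 2 * landauWeight κ m r := by
  have hcont := (contDiff_ofReal_boundaryLayer R κ).continuous
  have hpow : ∫ r in Ioo 0 R, r ^ (2 * m + 1) = R ^ (2 * m + 2) / (2 * (m + 1)) := by
    rw [← integral_Ioc_eq_integral_Ioo, ← intervalIntegral.integral_of_le hR, integral_pow]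
    push_cast
    ring
  calc _ = ∫ r in Ioo 0 R,
        (landauWeight κ m r - 2 * Real.exp (-(κ * R ^ 2)) * r ^ (2 * m + 1)) := by
        rw [integral_sub (integrableOn_Ioo_of_continuous (by fun_prop))
          (integrableOn_Ioo_of_continuous (by fun_prop)), integral_const_mul, hpow,
          integral_landauWeight hR hκ]
        field_simp
    _ ≤ _ := setIntegral_mono_on (integrableOn_Ioo_of_continuous (by fun_prop))
        (integrableOn_Ioo_of_continuous (by fun_prop)) measurableSet_Ioo
        fun r hr => landauWeight_sub_le_norm_boundaryLayer_sq_mul R κ m hr.1.le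

lemma factorial_div_mul_one_sub_le_weightPrimitive_sub (hR : 0 < R) (hκ : 0 < κ) (m : ℕ) :
    m ! / (2 * κ ^ (m + 1)) * (1 - 2 * (m + 2) / (κ * R ^ 2)) ≤
      weightPrimitive κ m R - Real.exp (-(κ * R ^ 2)) * R ^ (2 * m + 2) / (m + 1) := by
  obtain ⟨S, hS⟩ : ∃ S, S = κ * R ^ 2 := ⟨_, rfl⟩
  have hS0 : 0 < S := by rw [hS]; positivity
  have hsplit := expTail_eq_add_expTail_succ (m + 1) S
  have hlow : (1 - (m + 2) / S) * Real.exp S ≤ expTail (m + 2) S := by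
    have := mul_exp_sub_le_mul_expTail (m + 2) hS0.le
    push_cast at this
    rw [one_sub_div hS0.ne', div_mul_eq_mul_div, div_le_iff₀ hS0]
    linarith
  have htail : (1 - 2 * (m + 2) / S) * Real.exp S ≤
      expTail (m + 1) S - 2 * (S ^ (m + 1) / (m + 1)!) := by
    have := expTail_le_exp (m + 1) hS0.le
    rw [mul_div_assoc]
    linarith
  calc m ! / (2 * κ ^ (m + 1)) * (1 - 2 * (m + 2) / (κ * R ^ 2))
      = m ! / (2 * κ ^ (m + 1)) * Real.exp (-S) * ((1 - 2 * (m + 2) / S) * Real.exp S) := by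
        rw [← hS, Real.exp_neg]
        field_simp
    _ ≤ m ! / (2 * κ ^ (m + 1)) * Real.exp (-S)
          * (expTail (m + 1) S - 2 * (S ^ (m + 1) / (m + 1)!)) := by gcongr
    _ = weightPrimitive κ m R - Real.exp (-(κ * R ^ 2)) * R ^ (2 * m + 2) / (m + 1) := by
        rw [weightPrimitive, ← hS, Nat.factorial_succ, mul_sub]
        push_cast
        have hpow : S ^ (m + 1) = κ ^ (m + 1) * R ^ (2 * m + 2) := by rw [hS]; ring
        rw [hpow]
        field_simp

theorem IsDirichletBound.mul_one_sub_le_dirichletLeadingTerm {m : ℕ}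
    (hΛ : IsDirichletBound R (landauWeight κ m) Λ) (hΛ0 : 0 ≤ Λ) (hR : 0 < R) (hκ : 0 < κ) :
    Λ * (1 - 2 * (m + 2) / (κ * R ^ 2)) ≤ dirichletLeadingTerm R κ m := by
  have hweight (r : ℝ) (hr : r ∈ Ioo 0 R) : landauWeight κ m r ≤ R ^ (2 * m) * r := by
    have hr0 : 0 < r := hr.1
    calc landauWeight κ m r ≤ r ^ (2 * m + 1) * 1 := by
          rw [landauWeight]
          gcongr
          exact Real.exp_le_one_iff.2 (neg_nonpos.2 (by positivity))
      _ = r ^ (2 * m) * r := by ring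
      _ ≤ R ^ (2 * m) * r := by gcongr; exact hr.2.le
  have htrial := hΛ.mul_integral_le_of_norm_le hR (continuous_landauWeight κ m)
    (fun r hr => (landauWeight_pos κ m hr.1).le) hweight (contDiff_ofReal_boundaryLayer R κ)
    fun r hr => norm_ofReal_boundaryLayer_le hκ.le hr
  have hnorm := (factorial_div_mul_one_sub_le_weightPrimitive_sub hR hκ m).trans
    (weightPrimitive_sub_le_integral_boundaryLayer hR.le hκ.ne' m)
  have hbound := (mul_le_mul_of_nonneg_left hnorm hΛ0).trans
    (htrial.trans (integral_deriv_boundaryLayer_le hR.le hκ.le m))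
  calc Λ * (1 - 2 * (m + 2) / (κ * R ^ 2))
      = 2 * κ ^ (m + 1) / m !
          * (Λ * (m ! / (2 * κ ^ (m + 1)) * (1 - 2 * (m + 2) / (κ * R ^ 2)))) := by
        field_simp
    _ ≤ 2 * κ ^ (m + 1) / m ! * (2 * κ * R ^ (2 * m + 2) * Real.exp (-(κ * R ^ 2))) := by
        gcongr
    _ = dirichletLeadingTerm R κ m := by
        rw [dirichletLeadingTerm]
        ring

end UpperBound

section Asymptotics

lemma abs_sub_le_two_mul_mul {μ M x : ℝ} (hM : 0 ≤ M) (hx0 : 0 ≤ x) (hx : x ≤ 1 / 2)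
    (hlow : M ≤ μ * (1 + x)) (hup : μ * (1 - x) ≤ M) : |μ - M| ≤ 2 * x * M := by
  have hμ_le : μ ≤ M * (1 + 2 * x) :=
    le_of_mul_le_mul_right (by nlinarith [mul_nonneg hM hx0]) (by linarith : 0 < 1 - x)
  have hle_μ : M * (1 - 2 * x) ≤ μ :=
    le_of_mul_le_mul_right (by nlinarith [mul_nonneg hM hx0]) (by linarith : 0 < 1 + x)
  exact abs_le.2 ⟨by linarith, by linarith⟩

theorem abs_mum_sub_le {R B h κ : ℝ} (hR : 0 < R) (hh : h ≠ 0) (hκ0 : 0 < κ) (hκ : κ = B / (2 * h))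
    (m : ℕ) (hx : (m + 2) ^ 2 / (κ * R ^ 2) ≤ 1 / 2) :
    |mum R B h m - h ^ 2 * dirichletLeadingTerm R κ m| ≤
      2 * ((m + 2) ^ 2 / (κ * R ^ 2)) * (h ^ 2 * dirichletLeadingTerm R κ m) := by
  have hlead : 0 ≤ dirichletLeadingTerm R κ m := by unfold dirichletLeadingTerm; positivity
  have hlow := (mul_le_mum_iff hR hh hκ).2 (isDirichletBound_landauWeight hR.le hκ0 m)
  have hμ0 : 0 ≤ mum R B h m := le_trans (by positivity) hlow
  have hbottom : IsDirichletBound R (landauWeight κ m) (mum R B h m / h ^ 2) :=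
    (mul_le_mum_iff hR hh hκ).1 (mul_div_cancel₀ _ (pow_ne_zero 2 hh)).le
  have hup := hbottom.mul_one_sub_le_dirichletLeadingTerm (by positivity) hR hκ0
  refine abs_sub_le_two_mul_mul (by positivity) (by positivity) hx ?_ ?_
  · rw [← mul_div_assoc, div_le_iff₀ (by positivity)] at hlow
    refine hlow.trans ?_
    gcongr
    linarith
  · rw [div_mul_eq_mul_div, div_le_iff₀ (by positivity), mul_comm _ (h ^ 2)] at hup
    refine le_trans ?_ hup
    gcongr
    nlinarith [(m.cast_nonneg : (0 : ℝ) ≤ m)]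

end Asymptotics

/-- for `m ≥ 0`,
`μ_m(h) = 2hB (BR²/(2h))^{m+1}/m! · e^{−BR²/(2h)} (1 + O(h))` as `h → 0⁺`. -/
theorem stmt11 (R B : ℝ) (hR : 0 < R) (hB : 0 < B) (m : ℕ) :
    ∃ C > 0, ∃ h₀ > 0, ∀ h : ℝ, 0 < h → h < h₀ →
      |mum R B h (m : ℤ)
          - 2 * h * B * (B * R ^ 2 / (2 * h)) ^ (m + 1) / (Nat.factorial m) *
            Real.exp (-B * R ^ 2 / (2 * h))|
        ≤ C * h * (2 * h * B * (B * R ^ 2 / (2 * h)) ^ (m + 1) / (Nat.factorial m) *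
            Real.exp (-B * R ^ 2 / (2 * h))) := by
  refine ⟨4 * (m + 2) ^ 2 / (B * R ^ 2), by positivity, B * R ^ 2 / (4 * (m + 2) ^ 2),
    by positivity, fun h hh hlt => ?_⟩
  have hlead : 2 * h * B * (B * R ^ 2 / (2 * h)) ^ (m + 1) / m ! * Real.exp (-B * R ^ 2 / (2 * h)) =
      h ^ 2 * dirichletLeadingTerm R (B / (2 * h)) m := by
    rw [dirichletLeadingTerm, div_mul_eq_mul_div, neg_mul, neg_div]
    field_simp
    ring
  have hS : (m + 2) ^ 2 / (B / (2 * h) * R ^ 2) = 2 * (m + 2) ^ 2 / (B * R ^ 2) * h := by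
    field_simp
  have hx : (m + 2) ^ 2 / (B / (2 * h) * R ^ 2) ≤ 1 / 2 := by
    rw [lt_div_iff₀ (by positivity)] at hlt
    rw [hS, div_mul_eq_mul_div, div_le_iff₀ (by positivity)]
    linarith
  have hμ := abs_mum_sub_le hR hh.ne' (by positivity) rfl m hx
  rw [hS] at hμ
  rw [hlead]
  exact hμ.trans_eq (by ring)
end
end
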